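/- arXiv:1305.4719 — 3 statements merged into one kernel-verified Lean document; each statement's English description precedes it below -/
import Mathlib

section
/- Gaussian-smoothed second-order stable density correction, weighted version (limit of B₁₃^{(3)} in the proof of Theorem 3.3): for every s > 0 the integral I(s) := ∫₀^∞ z·(p(z) − C·z^{−Y−1})·P(0 ≤ σ·W ≤ s·z) dz converges absolutely, and lim_{s→0⁺} s^{−(2Y−1)}·I(s) = −(2·C²·Y·cos²(πY/2)·Γ(−Y)² / (√(2π)·σ^{2Y−1}))·m. -/
open MeasureTheory ProbabilityTheory Filter Topology Asymptotics Set

/-!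
Let `N` be standard normal. Since the Gaussian is its own Fourier transform,
`P(0 < N ≤ x) = E[sin (x N) / N] / √(2π)`. With `X` of law `μ`, Fubini therefore turns
`E[X P(0 < N ≤ a X); X > 0]` into a Gaussian average of `E[X sin (u X)]`, which is minus the
derivative of the characteristic function at `u = a N`. The result is
`c Y a ^ (Y - 1) / (2 √(2π))` times `E[|N| ^ (Y - 2) exp (-c (a |N|) ^ Y)]`. By the choice of `c`,
the contribution of the tail `C z ^ (-Y - 1)` is the same expression with the exponential replaced
by `1`, so the difference involves `exp (-c (a |N|) ^ Y) - 1 ~ -c a ^ Y |N| ^ Y` as `a → 0`.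

Only the positive part of `p` is a density of `μ` a priori; `p` is nonnegative because it is
continuous and the support of a symmetric stable law is the whole line.
-/

section
open Real
open scoped ENNReal

/-! ### Supports and densities -/

lemma map_mem_support {X Y : Type*} [TopologicalSpace X] [MeasurableSpace X]
    [OpensMeasurableSpace X] [TopologicalSpace Y] [MeasurableSpace Y] [BorelSpace Y]
    {ν : Measure X} {f : X → Y} (hf : Continuous f) {x : X} (hx : x ∈ ν.support) :
    f x ∈ (ν.map f).support := by
  rw [Measure.mem_support_iff_forall] at hx ⊢
  exact fun U hU ↦ (hx _ (hf.continuousAt.preimage_mem_nhds hU)).trans_le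
    (Measure.le_map_apply hf.aemeasurable U)

lemma mk_mem_support_prod {X Y : Type*} [TopologicalSpace X] [MeasurableSpace X]
    [TopologicalSpace Y] [MeasurableSpace Y] {μ : Measure X} {ν : Measure Y} [SFinite ν]
    {x : X} {y : Y} (hx : x ∈ μ.support) (hy : y ∈ ν.support) : (x, y) ∈ (μ.prod ν).support := by
  rw [Measure.mem_support_iff_forall] at hx hy ⊢
  intro U hU
  obtain ⟨s, hs, t, ht, hst⟩ := mem_nhds_prod_iff.1 hU
  refine lt_of_lt_of_le ?_ (measure_mono hst)
  rw [Measure.prod_prod]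
  exact ENNReal.mul_pos (hx s hs).ne' (hy t ht).ne'

lemma nonneg_of_support_withDensity_eq_univ {X : Type*} [TopologicalSpace X] [MeasurableSpace X]
    [OpensMeasurableSpace X] {ν : Measure X} {p : X → ℝ} (hp : Continuous p)
    (hsupp : (ν.withDensity fun x ↦ .ofReal (p x)).support = univ) (x : X) : 0 ≤ p x := by
  by_contra! hx
  have hopen : IsOpen {y | p y < 0} := isOpen_lt hp continuous_const
  have hpos := (Measure.mem_support_iff_forall x).1 (hsupp ▸ mem_univ x) _ (hopen.mem_nhds hx)
  rw [withDensity_apply _ hopen.measurableSet] at hpos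
  refine hpos.ne' (setLIntegral_eq_zero hopen.measurableSet fun y hy ↦ ?_)
  exact ENNReal.ofReal_of_nonpos (le_of_lt hy)

lemma setIntegral_withDensity_ofReal {X : Type*} {_ : MeasurableSpace X} {ν : Measure X}
    {p : X → ℝ} (hp : Measurable p) (hp₀ : ∀ x, 0 ≤ p x) (f : X → ℝ) {s : Set X}
    (hs : MeasurableSet s) :
    ∫ x in s, f x ∂ν.withDensity (fun x ↦ .ofReal (p x)) = ∫ x in s, p x * f x ∂ν := by
  rw [setIntegral_withDensity_eq_setIntegral_toReal_smul (by fun_prop)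
    (ae_of_all _ fun _ ↦ ENNReal.ofReal_lt_top) f hs]
  simp only [ENNReal.toReal_ofReal (hp₀ _), smul_eq_mul]

lemma integrableOn_withDensity_ofReal_iff {X : Type*} {_ : MeasurableSpace X} {ν : Measure X}
    {p : X → ℝ} (hp : Measurable p) (hp₀ : ∀ x, 0 ≤ p x) {f : X → ℝ} {s : Set X}
    (hs : MeasurableSet s) :
    IntegrableOn f s (ν.withDensity fun x ↦ .ofReal (p x))
      ↔ IntegrableOn (fun x ↦ p x * f x) s ν := by
  rw [IntegrableOn, restrict_withDensity hs, integrable_withDensity_iff_integrable_smul'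
    (by fun_prop) (ae_of_all _ fun _ ↦ ENNReal.ofReal_lt_top)]
  simp only [ENNReal.toReal_ofReal (hp₀ _), smul_eq_mul, IntegrableOn]

/-! ### Moments and distribution function of the Gaussian -/

lemma Gamma_div_two_eq_mul_Gamma_one_sub_div_two {s : ℝ} (hs₀ : 0 < s) (hs₁ : s < 1) :
    Gamma (s / 2) = 2 ^ (1 - s) / √π * cos (π * s / 2) * Gamma s * Gamma ((1 - s) / 2) := by
  have gammaR_ofReal (t : ℝ) :
      Complex.Gammaℝ t = (π ^ (-t / 2) * Gamma (t / 2) : ℝ) := by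
    rw [Complex.Gammaℝ_def, Complex.ofReal_mul, Complex.ofReal_cpow pi_nonneg,
      ← Complex.Gamma_ofReal]
    push_cast
    rfl
  have gammaC_ofReal : Complex.Gammaℂ s = (2 * (2 * π) ^ (-s) * Gamma s : ℝ) := by
    rw [Complex.Gammaℂ_def, Complex.ofReal_mul, Complex.ofReal_mul,
      Complex.ofReal_cpow (by positivity), ← Complex.Gamma_ofReal]
    push_cast
    rfl
  have reflection := Complex.Gammaℝ_div_Gammaℝ_one_sub (s := s) fun n h ↦ by
    have : s = -(2 * n + 1) := by exact_mod_cast h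
    linarith [n.cast_nonneg (α := ℝ)]
  have harg : (π * s / 2 : ℂ) = (π * s / 2 : ℝ) := by push_cast; rfl
  rw [← Complex.ofReal_one, ← Complex.ofReal_sub, gammaR_ofReal, gammaR_ofReal, gammaC_ofReal,
    harg, ← Complex.ofReal_cos] at reflection
  norm_cast at reflection
  have hG : 0 < Gamma ((1 - s) / 2) := Gamma_pos_of_pos (by linarith)
  rw [div_eq_iff (by positivity), mul_rpow zero_le_two pi_nonneg] at reflection
  have hpow : π ^ (-s) * π ^ (-(1 - s) / 2) = π ^ (-s / 2) / √π := by
    rw [sqrt_eq_rpow, ← rpow_sub pi_pos, ← rpow_add pi_pos]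
    ring_nf
  have htwo : (2 : ℝ) ^ (1 - s) = 2 * 2 ^ (-s) := by
    rw [sub_eq_add_neg, rpow_add two_pos, rpow_one]
  have hπ : 0 < π ^ (-s / 2) := by positivity
  refine mul_left_cancel₀ hπ.ne' (reflection.trans ?_)
  calc _ = 2 * 2 ^ (-s) * Gamma s * cos (π * s / 2) * Gamma ((1 - s) / 2)
        * (π ^ (-s) * π ^ (-(1 - s) / 2)) := by ring
    _ = _ := by rw [hpow, htwo]; ring

lemma integral_abs_rpow_gaussianReal {q : ℝ} (hq : -1 < q) :
    ∫ x, |x| ^ q ∂gaussianReal 0 1 = 2 ^ (q / 2) * Gamma ((q + 1) / 2) / √π := by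
  have hpdf (x : ℝ) : gaussianPDFReal 0 1 x • |x| ^ q
      = (√(2 * π))⁻¹ * (|x| ^ q * exp (-(1 / 2) * |x| ^ (2 : ℝ))) := by
    simp only [gaussianPDFReal, NNReal.coe_one, mul_one, sub_zero, smul_eq_mul, rpow_two, sq_abs]
    ring_nf
  have hhalf : (1 / 2 : ℝ) ^ (-(q + 1) / 2) = 2 ^ (q / 2) * √2 := by
    rw [one_div, inv_rpow zero_le_two, ← rpow_neg zero_le_two, sqrt_eq_rpow, ← rpow_add two_pos]
    ring_nf
  rw [integral_gaussianReal_eq_integral_smul one_ne_zero]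
  simp_rw [hpdf]
  rw [integral_const_mul,
    integral_comp_abs (f := fun x ↦ x ^ q * exp (-(1 / 2) * x ^ (2 : ℝ))),
    integral_rpow_mul_exp_neg_mul_rpow two_pos hq (by norm_num), hhalf, sqrt_mul zero_le_two]
  field_simp

lemma integrable_abs_rpow_gaussianReal {q : ℝ} (hq : -1 < q) :
    Integrable (fun x ↦ |x| ^ q) (gaussianReal 0 1) := by
  refine .of_integral_ne_zero ?_
  have : 0 < Gamma ((q + 1) / 2) := Gamma_pos_of_pos (by linarith)
  rw [integral_abs_rpow_gaussianReal hq]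
  positivity

lemma integral_abs_rpow_sub_one_gaussianReal {s : ℝ} (hs₀ : 0 < s) (hs₁ : s < 1) :
    ∫ x, |x| ^ (s - 1) ∂gaussianReal 0 1
      = √(2 / π) * (Gamma s * cos (π * s / 2)) * ∫ x, |x| ^ (-s) ∂gaussianReal 0 1 := by
  rw [integral_abs_rpow_gaussianReal (by linarith), integral_abs_rpow_gaussianReal (by linarith),
    sub_add_cancel, neg_add_eq_sub, Gamma_div_two_eq_mul_Gamma_one_sub_div_two hs₀ hs₁,
    sqrt_div zero_le_two]
  have hpow : (2 : ℝ) ^ ((s - 1) / 2) * 2 ^ (1 - s) = √2 * 2 ^ (-s / 2) := by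
    rw [sqrt_eq_rpow, ← rpow_add two_pos, ← rpow_add two_pos]
    ring_nf
  linear_combination (cos (π * s / 2) * Gamma s * Gamma ((1 - s) / 2) / (√π * √π)) * hpow

lemma re_charFun_eq_integral_cos (μ : Measure ℝ) [IsFiniteMeasure μ] (t : ℝ) :
    (charFun μ t).re = ∫ x, cos (t * x) ∂μ := by
  have hint : Integrable (fun x : ℝ ↦ Complex.exp (t * x * Complex.I)) μ :=
    .of_bound (by fun_prop) 1 <| ae_of_all _ fun x ↦ by
      rw [← Complex.ofReal_mul, Complex.norm_exp_ofReal_mul_I]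
  rw [charFun_apply_real, ← RCLike.re_eq_complex_re, ← integral_re hint]
  congr with x
  rw [RCLike.re_eq_complex_re, ← Complex.ofReal_mul, Complex.exp_ofReal_mul_I_re]

lemma integral_cos_gaussianReal (t : ℝ) :
    ∫ w, cos (t * w) ∂gaussianReal 0 1 = exp (-t ^ 2 / 2) := by
  rw [← re_charFun_eq_integral_cos, charFun_gaussianReal, ← Complex.exp_ofReal_re]
  push_cast
  congr 2
  simp
  ring

instance : NullSingletonClass (gaussianReal 0 1) := nullSingletonClass_gaussianReal one_ne_zero

instance (v : NNReal) : (gaussianReal 0 v).IsNegInvariant :=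
  ⟨by rw [Measure.neg, gaussianReal_map_neg, neg_zero]⟩

lemma measureReal_gaussianReal_Ioc_eq_integral_sin {x : ℝ} (hx : 0 ≤ x) :
    (gaussianReal 0 1).real (Ioc 0 x) = (√(2 * π))⁻¹ * ∫ w, sin (x * w) / w ∂gaussianReal 0 1 := by
  have : IsFiniteMeasure (volume.restrict (uIoc 0 x)) := ⟨by simp [uIoc]⟩
  have hswap := intervalIntegral_integral_swap (μ := gaussianReal 0 1) (a := 0) (b := x)
    (f := fun t w ↦ cos (t * w))
    (.of_bound (by simp only [Function.uncurry_def]; fun_prop) 1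
      (ae_of_all _ fun z ↦ abs_cos_le_one _))
  have hinner : ∀ᵐ w ∂gaussianReal 0 1, ∫ t in 0..x, cos (t * w) = sin (x * w) / w := by
    filter_upwards [(gaussianReal 0 1).ae_ne 0] with w hw
    rw [intervalIntegral.integral_comp_mul_right _ hw, integral_cos, zero_mul, sin_zero, sub_zero,
      smul_eq_mul, inv_mul_eq_div]
  rw [measureReal_def, gaussianReal_apply_eq_integral _ one_ne_zero, ENNReal.toReal_ofReal
    (integral_nonneg fun _ ↦ gaussianPDFReal_nonneg _ _ _),
    ← intervalIntegral.integral_of_le hx, ← integral_congr_ae hinner, ← hswap,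
    ← intervalIntegral.integral_const_mul]
  simp [integral_cos_gaussianReal, gaussianPDFReal]

/-! ### Power weights against a distribution function -/

lemma setIntegral_Ioi_eq_integral_div_two {ν : Measure ℝ} [NullSingletonClass ν] [ν.IsNegInvariant]
    {f : ℝ → ℝ} (hf : Integrable f ν) (heven : f.Even) :
    ∫ x in Ioi 0, f x ∂ν = (∫ x, f x ∂ν) / 2 := by
  have hneg : ∫ x in Iio 0, f x ∂ν = ∫ x in Ioi 0, f x ∂ν := by
    rw [← (Measure.measurePreserving_neg ν).setIntegral_preimage_emb
      (Homeomorph.neg ℝ).measurableEmbedding]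
    simp only [heven _, neg_preimage, neg_Iio, neg_zero]
  rw [← integral_add_compl measurableSet_Ioi hf, compl_Ioi, integral_Iic_eq_integral_Iio, hneg]
  ring

lemma lintegral_Ici_rpow_neg {Y x : ℝ} (hY : 1 < Y) (hx : 0 < x) :
    ∫⁻ z in Ici x, .ofReal (z ^ (-Y)) = .ofReal (x ^ (1 - Y) / (Y - 1)) := by
  have hint := integrableOn_Ioi_rpow_of_lt (neg_lt_neg hY) hx
  have hnonneg : ∀ᵐ z ∂volume.restrict (Ioi x), 0 ≤ z ^ (-Y) := by
    filter_upwards [ae_restrict_mem measurableSet_Ioi] with z hz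
    exact rpow_nonneg (hx.trans hz).le _
  rw [← restrict_Ioi_eq_restrict_Ici, ← ofReal_integral_eq_lintegral_ofReal hint hnonneg,
    integral_Ioi_rpow_of_lt (neg_lt_neg hY) hx, neg_add_eq_sub, neg_div, ← div_neg, neg_sub]

lemma lintegral_rpow_neg_mul_measure_Ioc (ν : Measure ℝ) [SFinite ν] {Y a : ℝ} (hY : 1 < Y)
    (ha : 0 < a) :
    ∫⁻ z in Ioi 0, .ofReal (z ^ (-Y)) * ν (Ioc 0 (a * z))
      = .ofReal (a ^ (Y - 1) / (Y - 1)) * ∫⁻ t in Ioi 0, .ofReal (t ^ (1 - Y)) ∂ν := by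
  let S : Set (ℝ × ℝ) := {q | q.2 ≤ a * q.1}
  have hS : MeasurableSet S := measurableSet_le (by fun_prop) (by fun_prop)
  let f : ℝ → ℝ → ℝ≥0∞ := fun z t ↦ S.indicator (fun q ↦ .ofReal (q.1 ^ (-Y))) (z, t)
  have hf : Measurable (Function.uncurry f) := Measurable.indicator (by fun_prop) hS
  have integral_t (z : ℝ) :
      ∫⁻ t in Ioi 0, f z t ∂ν = .ofReal (z ^ (-Y)) * ν (Ioc 0 (a * z)) := by
    have : f z = (Iic (a * z)).indicator fun _ ↦ .ofReal (z ^ (-Y)) := rfl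
    rw [this, lintegral_indicator_const measurableSet_Iic,
      Measure.restrict_apply measurableSet_Iic, Iic_inter_Ioi]
  have integral_z {t : ℝ} (ht : 0 < t) :
      ∫⁻ z in Ioi 0, f z t = .ofReal (a ^ (Y - 1) / (Y - 1)) * .ofReal (t ^ (1 - Y)) := by
    have : (f · t) = (Ici (t / a)).indicator fun z ↦ .ofReal (z ^ (-Y)) := by
      ext z
      simp only [f, S, indicator, mem_ofPred_eq, mem_Ici, div_le_iff₀' ha]
    rw [this, setLIntegral_indicator measurableSet_Ici,
      inter_eq_left.2 (Ici_subset_Ioi.2 (div_pos ht ha)), lintegral_Ici_rpow_neg hY (by positivity),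
      ← ENNReal.ofReal_mul (div_nonneg (by positivity) (by linarith)), div_rpow ht.le ha.le,
      ← neg_sub Y 1, rpow_neg ha.le]
    congr 1
    field_simp
  calc _ = ∫⁻ z in Ioi 0, ∫⁻ t in Ioi 0, f z t ∂ν := by simp only [integral_t]
    _ = ∫⁻ t in Ioi 0, (∫⁻ z in Ioi 0, f z t) ∂ν := lintegral_lintegral_swap hf.aemeasurable
    _ = ∫⁻ t in Ioi 0, .ofReal (a ^ (Y - 1) / (Y - 1)) * .ofReal (t ^ (1 - Y)) ∂ν :=
      setLIntegral_congr_fun measurableSet_Ioi fun t ht ↦ integral_z ht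
    _ = _ := lintegral_const_mul _ (by fun_prop)

section FiniteMeasure

variable {ν : Measure ℝ} [IsFiniteMeasure ν] {Y a : ℝ}

lemma measurable_measureReal_Ioc_mul (ν : Measure ℝ) [IsFiniteMeasure ν] (ha : 0 ≤ a) :
    Measurable fun z ↦ ν.real (Ioc 0 (a * z)) :=
  Monotone.measurable fun _ _ h ↦
    measureReal_mono (Ioc_subset_Ioc_right (mul_le_mul_of_nonneg_left h ha))

lemma ae_restrict_Ioi_rpow_mul_measureReal_Ioc_nonneg (ν : Measure ℝ) (q a : ℝ) :
    ∀ᵐ z ∂volume.restrict (Ioi 0), 0 ≤ z ^ q * ν.real (Ioc 0 (a * z)) :=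
  ae_restrict_of_forall_mem measurableSet_Ioi fun _ hz ↦
    mul_nonneg (rpow_nonneg (le_of_lt hz) _) measureReal_nonneg

lemma lintegral_rpow_neg_mul_measureReal_Ioc (hY : 1 < Y) (ha : 0 < a)
    (hν : IntegrableOn (fun t ↦ t ^ (1 - Y)) (Ioi 0) ν) :
    ∫⁻ z in Ioi 0, .ofReal (z ^ (-Y) * ν.real (Ioc 0 (a * z)))
      = .ofReal (a ^ (Y - 1) / (Y - 1) * ∫ t in Ioi 0, t ^ (1 - Y) ∂ν) := by
  have hnonneg : ∀ᵐ t ∂ν.restrict (Ioi 0), 0 ≤ t ^ (1 - Y) :=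
    ae_restrict_of_forall_mem measurableSet_Ioi fun _ ht ↦ rpow_nonneg (le_of_lt ht) _
  rw [ENNReal.ofReal_mul (div_nonneg (by positivity) (by linarith)),
    ofReal_integral_eq_lintegral_ofReal hν hnonneg, ← lintegral_rpow_neg_mul_measure_Ioc _ hY ha]
  refine setLIntegral_congr_fun measurableSet_Ioi fun z hz ↦ ?_
  rw [ENNReal.ofReal_mul (rpow_nonneg (le_of_lt hz) _), ofReal_measureReal (by finiteness)]

lemma integrableOn_rpow_neg_mul_measureReal_Ioc (hY : 1 < Y) (ha : 0 < a)
    (hν : IntegrableOn (fun t ↦ t ^ (1 - Y)) (Ioi 0) ν) :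
    IntegrableOn (fun z ↦ z ^ (-Y) * ν.real (Ioc 0 (a * z))) (Ioi 0) := by
  have := measurable_measureReal_Ioc_mul ν ha.le
  rw [IntegrableOn, ← lintegral_ofReal_ne_top_iff_integrable (by fun_prop)
    (ae_restrict_Ioi_rpow_mul_measureReal_Ioc_nonneg _ _ _),
    lintegral_rpow_neg_mul_measureReal_Ioc hY ha hν]
  exact ENNReal.ofReal_ne_top

lemma integral_rpow_neg_mul_measureReal_Ioc (hY : 1 < Y) (ha : 0 < a)
    (hν : IntegrableOn (fun t ↦ t ^ (1 - Y)) (Ioi 0) ν) :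
    ∫ z in Ioi 0, z ^ (-Y) * ν.real (Ioc 0 (a * z))
      = a ^ (Y - 1) / (Y - 1) * ∫ t in Ioi 0, t ^ (1 - Y) ∂ν := by
  rw [integral_eq_lintegral_of_nonneg_ae (ae_restrict_Ioi_rpow_mul_measureReal_Ioc_nonneg _ _ _)
    (integrableOn_rpow_neg_mul_measureReal_Ioc hY ha hν).1,
    lintegral_rpow_neg_mul_measureReal_Ioc hY ha hν, ENNReal.toReal_ofReal]
  exact mul_nonneg (div_nonneg (by positivity) (by linarith))
    (setIntegral_nonneg measurableSet_Ioi fun _ ht ↦ rpow_nonneg (le_of_lt ht) _)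

end FiniteMeasure

lemma integrableOn_Ioi_rpow_gaussianReal {q : ℝ} (hq : -1 < q) :
    IntegrableOn (fun t ↦ t ^ q) (Ioi 0) (gaussianReal 0 1) :=
  (integrable_abs_rpow_gaussianReal hq).integrableOn.congr_fun
    (fun t ht ↦ by simp only [abs_of_pos (mem_Ioi.1 ht)]) measurableSet_Ioi

lemma Gamma_two_sub {Y : ℝ} (hY₀ : Y ≠ 0) (hY₁ : Y ≠ 1) :
    Gamma (2 - Y) = Y * (Y - 1) * Gamma (-Y) := by
  have h₁ := Gamma_add_one (neg_ne_zero.2 hY₀)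
  have h₂ := Gamma_add_one (s := -Y + 1) (by rwa [neg_add_eq_sub, sub_ne_zero, ne_comm])
  rw [show 2 - Y = -Y + 1 + 1 by ring, h₂, h₁]
  ring

lemma setIntegral_Ioi_rpow_gaussianReal {Y : ℝ} (hY₁ : 1 < Y) (hY₂ : Y < 2) :
    ∫ t in Ioi 0, t ^ (1 - Y) ∂gaussianReal 0 1
      = -(Gamma (-Y) * cos (π * Y / 2) * Y * (Y - 1) / √(2 * π))
        * ∫ w, |w| ^ (Y - 2) ∂gaussianReal 0 1 := by
  have hcos : cos (π * (2 - Y) / 2) = -cos (π * Y / 2) := by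
    rw [← cos_pi_sub]
    ring_nf
  have hsqrt : √(2 / π) = 2 / √(2 * π) := by
    rw [sqrt_div zero_le_two, sqrt_mul zero_le_two, div_eq_div_iff (by positivity) (by positivity),
      ← mul_assoc, mul_self_sqrt zero_le_two]
  have hmoment := integral_abs_rpow_sub_one_gaussianReal (s := 2 - Y) (by linarith) (by linarith)
  rw [show 2 - Y - 1 = 1 - Y by ring, neg_sub, hcos, hsqrt,
    Gamma_two_sub (by linarith) hY₁.ne'] at hmoment
  calc ∫ t in Ioi 0, t ^ (1 - Y) ∂gaussianReal 0 1
      = ∫ t in Ioi 0, |t| ^ (1 - Y) ∂gaussianReal 0 1 :=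
        setIntegral_congr_fun measurableSet_Ioi fun t ht ↦ by rw [abs_of_pos ht]
    _ = (∫ t, |t| ^ (1 - Y) ∂gaussianReal 0 1) / 2 := setIntegral_Ioi_eq_integral_div_two
        (integrable_abs_rpow_gaussianReal (by linarith)) fun t ↦ by rw [abs_neg]
    _ = _ := by rw [hmoment]; ring

lemma integral_rpow_neg_mul_gaussianReal_Ioc {Y a : ℝ} (hY₁ : 1 < Y) (hY₂ : Y < 2) (ha : 0 < a) :
    ∫ z in Ioi 0, z ^ (-Y) * (gaussianReal 0 1).real (Ioc 0 (a * z))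
      = -(Gamma (-Y) * cos (π * Y / 2) * Y * a ^ (Y - 1) / √(2 * π))
        * ∫ w, |w| ^ (Y - 2) ∂gaussianReal 0 1 := by
  have : Y - 1 ≠ 0 := by linarith
  rw [integral_rpow_neg_mul_measureReal_Ioc hY₁ ha
    (integrableOn_Ioi_rpow_gaussianReal (by linarith)), setIntegral_Ioi_rpow_gaussianReal hY₁ hY₂]
  field_simp

lemma Gamma_pos_of_neg_two_lt_of_lt_neg_one {s : ℝ} (hs₂ : -2 < s) (hs₁ : s < -1) :
    0 < Gamma s := by
  have hpos : 0 < Gamma (s + 1 + 1) := Gamma_pos_of_pos (by linarith)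
  rw [Gamma_add_one (by linarith), Gamma_add_one (by linarith), ← mul_assoc] at hpos
  exact pos_of_mul_pos_right hpos (mul_nonneg_of_nonpos_of_nonpos (by linarith) (by linarith))

lemma neg_Gamma_neg_mul_cos_pos {Y : ℝ} (hY₁ : 1 < Y) (hY₂ : Y < 2) :
    0 < -(Gamma (-Y) * cos (π * Y / 2)) := by
  have hcos : cos (π * Y / 2) < 0 :=
    cos_neg_of_pi_div_two_lt_of_lt (by nlinarith [pi_pos]) (by nlinarith [pi_pos])
  rw [← mul_neg]
  exact mul_pos (Gamma_pos_of_neg_two_lt_of_lt_neg_one (by linarith) (by linarith)) (by linarith)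

/-! ### Expansion of the exponential under a moment condition -/

lemma tendsto_exp_mul_sub_one_div (k : ℝ) :
    Tendsto (fun b ↦ (exp (k * b) - 1) / b) (𝓝[≠] 0) (𝓝 k) := by
  have hderiv : HasDerivAt (fun b ↦ exp (k * b)) k 0 := by
    simpa using ((hasDerivAt_id (0 : ℝ)).const_mul k).exp
  refine hderiv.tendsto_slope.congr fun b ↦ ?_
  rw [slope_def_field, mul_zero, exp_zero, sub_zero]

lemma tendsto_rpow_nhdsGT_zero {Y : ℝ} (hY : 0 < Y) :
    Tendsto (fun a : ℝ ↦ a ^ Y) (𝓝[>] 0) (𝓝[>] 0) := by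
  refine tendsto_nhdsWithin_iff.2 ⟨?_, ?_⟩
  · simpa only [zero_rpow hY.ne'] using
      (continuousAt_rpow_const 0 Y (.inr hY.le)).tendsto.mono_left nhdsWithin_le_nhds
  · filter_upwards [self_mem_nhdsWithin] with a ha using rpow_pos_of_pos ha Y

lemma abs_exp_neg_sub_one_le {x : ℝ} (hx : 0 ≤ x) : |exp (-x) - 1| ≤ x := by
  rw [abs_of_nonpos (by linarith [exp_le_one_iff.2 (neg_nonpos.2 hx)])]
  linarith [add_one_le_exp (-x)]

lemma tendsto_integral_rpow_mul_exp_sub_one {ν : Measure ℝ} {q Y c : ℝ} (hY : 0 < Y)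
    (hqY : q + Y ≠ 0) (hc : 0 ≤ c) (hν : Integrable (fun w ↦ |w| ^ (q + Y)) ν) :
    Tendsto (fun a : ℝ ↦ ∫ w, |w| ^ q * ((exp (-(c * (a * |w|) ^ Y)) - 1) / a ^ Y) ∂ν)
      (𝓝[>] 0) (𝓝 (-c * ∫ w, |w| ^ (q + Y) ∂ν)) := by
  have split (w : ℝ) : |w| ^ (q + Y) = |w| ^ q * |w| ^ Y := rpow_add' (abs_nonneg w) hqY
  rw [← integral_const_mul]
  refine tendsto_integral_filter_of_dominated_convergence (fun w ↦ c * |w| ^ (q + Y))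
    (.of_forall fun a ↦ by fun_prop) ?_ (hν.const_mul c) (ae_of_all _ fun w ↦ ?_)
  · filter_upwards [self_mem_nhdsWithin] with a ha
    refine ae_of_all _ fun w ↦ ?_
    have haY : 0 < a ^ Y := rpow_pos_of_pos ha Y
    have hbound := abs_exp_neg_sub_one_le (x := c * (a * |w|) ^ Y)
      (mul_nonneg hc (rpow_nonneg (mul_nonneg (le_of_lt ha) (abs_nonneg w)) Y))
    rw [norm_mul, norm_div, norm_of_nonneg (by positivity : 0 ≤ |w| ^ q), norm_of_nonneg haY.le,
      split, mul_left_comm]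
    gcongr
    rwa [div_le_iff₀ haY, mul_right_comm, mul_assoc, ← mul_rpow (le_of_lt ha) (abs_nonneg w)]
  · have hlim := ((tendsto_exp_mul_sub_one_div (-(c * |w| ^ Y))).comp
      ((tendsto_rpow_nhdsGT_zero hY).mono_right (nhdsWithin_mono _ fun _ hb ↦ ne_of_gt hb)))
      |>.const_mul (|w| ^ q)
    rw [split, neg_mul, mul_left_comm, ← mul_neg]
    refine hlim.congr' ?_
    filter_upwards [self_mem_nhdsWithin] with a ha
    rw [Function.comp_apply, mul_rpow (le_of_lt ha) (abs_nonneg w)]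
    ring_nf

/-! ### Symmetric stable laws -/

lemma abs_sin_le_abs_rpow {e : ℝ} (he₀ : 0 ≤ e) (he₁ : e ≤ 1) (y : ℝ) : |sin y| ≤ |y| ^ e := by
  rcases le_total |y| 1 with hy | hy
  · calc |sin y| ≤ |y| ^ (1 : ℝ) := by rw [rpow_one]; exact abs_sin_le_abs
      _ ≤ |y| ^ e := rpow_le_rpow_of_exponent_ge' (abs_nonneg y) hy he₀ he₁
  · exact (abs_sin_le_one y).trans (one_le_rpow hy he₀)

lemma abs_mul_sin_div_le {r : ℝ} (hr₁ : 1 < r) (hr₂ : r ≤ 2) (a x w : ℝ) :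
    |x * sin (a * w * x) / w| ≤ |a| ^ (r - 1) * (|x| ^ r * |w| ^ (r - 2)) := by
  rcases eq_or_ne w 0 with rfl | hw
  · rw [div_zero, abs_zero]
    positivity
  have hsin := abs_sin_le_abs_rpow (sub_nonneg.2 hr₁.le) (by linarith) (a * w * x)
  have hw : 0 < |w| := abs_pos.2 hw
  have hwr : |w| ^ (r - 2) = |w| ^ (r - 1) / |w| := by
    rw [← rpow_sub_one hw.ne']
    ring_nf
  calc |x * sin (a * w * x) / w| = |x| * |sin (a * w * x)| / |w| := by rw [abs_div, abs_mul]
    _ ≤ |x| * |a * w * x| ^ (r - 1) / |w| := by gcongr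
    _ = |a| ^ (r - 1) * (|x| ^ (1 + (r - 1)) * |w| ^ (r - 2)) := by
      rw [abs_mul, abs_mul, mul_rpow (by positivity) (abs_nonneg x),
        mul_rpow (abs_nonneg a) hw.le, hwr, rpow_one_add' (abs_nonneg x) (by linarith)]
      ring
    _ = |a| ^ (r - 1) * (|x| ^ r * |w| ^ (r - 2)) := by rw [add_sub_cancel]

lemma integrable_prod_mul_sin_div {μ ν : Measure ℝ} [SFinite ν] {r : ℝ} (hr₁ : 1 < r)
    (hr₂ : r ≤ 2) (hμ : Integrable (fun x ↦ |x| ^ r) μ)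
    (hν : Integrable (fun w ↦ |w| ^ (r - 2)) ν) (a : ℝ) :
    Integrable (fun z : ℝ × ℝ ↦ z.1 * sin (a * z.2 * z.1) / z.2) (μ.prod ν) :=
  ((hμ.mul_prod hν).const_mul (|a| ^ (r - 1))).mono'
    (Measurable.aestronglyMeasurable (by fun_prop))
    (ae_of_all _ fun z ↦ abs_mul_sin_div_le hr₁ hr₂ a z.1 z.2)

lemma mul_sub_mul_rpow_mul_eq {z : ℝ} (hz : 0 < z) (x C Y g : ℝ) :
    z * (x - C * z ^ (-Y - 1)) * g = x * (z * g) - C * (z ^ (-Y) * g) := by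
  rw [rpow_sub_one hz.ne']
  field_simp

lemma integrable_abs_rpow_of_measureReal_lt_abs_le {α : Type*} {_ : MeasurableSpace α}
    {ν : Measure α} [IsFiniteMeasure ν] {f : α → ℝ} (hf : AEMeasurable f ν) {K r Y : ℝ}
    (hr : 0 < r) (hrY : r < Y) (htail : ∀ R > 0, ν.real {x | R < |f x|} ≤ K * R ^ (-Y)) :
    Integrable (fun x ↦ |f x| ^ r) ν := by
  let g : ℝ → ℝ := fun t ↦ ν.real {x | t < |f x|} * t ^ (r - 1)
  have hg : Measurable g := by
    refine Measurable.mul (Antitone.measurable fun s t hst ↦ measureReal_mono ?_) (by fun_prop)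
    exact fun _ ↦ hst.trans_lt
  have hg_nonneg : ∀ t > 0, 0 ≤ g t := fun t ht ↦
    mul_nonneg measureReal_nonneg (rpow_nonneg (le_of_lt ht) _)
  have near_zero : IntegrableOn g (Ioc 0 1) := by
    have hrpow : IntegrableOn (fun t : ℝ ↦ t ^ (r - 1)) (Ioc 0 1) :=
      (intervalIntegrable_iff_integrableOn_Ioc_of_le zero_le_one).1
        (intervalIntegral.intervalIntegrable_rpow' (by linarith))
    refine (hrpow.const_mul (ν.real univ)).mono' hg.aestronglyMeasurable
      (ae_restrict_of_forall_mem measurableSet_Ioc fun t ht ↦ ?_)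
    rw [norm_of_nonneg (hg_nonneg t ht.1)]
    exact mul_le_mul_of_nonneg_right (measureReal_mono (subset_univ _)) (rpow_nonneg ht.1.le _)
  have near_top : IntegrableOn g (Ioi 1) := by
    have hrpow : IntegrableOn (fun t : ℝ ↦ t ^ (-Y + (r - 1))) (Ioi 1) :=
      integrableOn_Ioi_rpow_of_lt (by linarith) one_pos
    refine (hrpow.const_mul K).mono' hg.aestronglyMeasurable
      (ae_restrict_of_forall_mem measurableSet_Ioi fun t ht ↦ ?_)
    have ht : 0 < t := one_pos.trans ht
    rw [norm_of_nonneg (hg_nonneg t ht), rpow_add ht, ← mul_assoc]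
    exact mul_le_mul_of_nonneg_right (htail t ht) (rpow_nonneg ht.le _)
  have hg_int : IntegrableOn g (Ioi 0) := by
    rw [← Ioc_union_Ioi_eq_Ioi zero_le_one]
    exact near_zero.union near_top
  rw [← lintegral_ofReal_ne_top_iff_integrable (hf.abs.pow_const r).aestronglyMeasurable
    (ae_of_all _ fun x ↦ rpow_nonneg (abs_nonneg _) _),
    lintegral_rpow_eq_lintegral_meas_lt_mul ν (ae_of_all _ fun x ↦ abs_nonneg _) (by fun_prop) hr]
  refine ENNReal.mul_ne_top ENNReal.ofReal_ne_top ?_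
  simpa only [g, ENNReal.ofReal_mul measureReal_nonneg, ofReal_measureReal (measure_ne_top ν _)]
    using (Integrable.lintegral_lt_top hg_int).ne

lemma hasDerivAt_integral_cos {ν : Measure ℝ} [IsFiniteMeasure ν] (hν : Integrable id ν) (t : ℝ) :
    HasDerivAt (fun t ↦ ∫ x, cos (t * x) ∂ν) (-∫ x, x * sin (t * x) ∂ν) t := by
  rw [← integral_neg]
  refine (hasDerivAt_integral_of_dominated_loc_of_deriv_le (F := fun t x ↦ cos (t * x))
    (F' := fun t x ↦ -(x * sin (t * x))) (bound := fun x ↦ |x|) univ_mem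
    (.of_forall fun _ ↦ by fun_prop)
    (.of_bound (by fun_prop) 1 (ae_of_all _ fun x ↦ abs_cos_le_one _))
    (by fun_prop) (ae_of_all _ fun x s _ ↦ ?_) hν.abs (ae_of_all _ fun x s _ ↦ ?_)).2
  · rw [norm_neg, norm_mul]
    exact mul_le_of_le_one_right (norm_nonneg x) (abs_sin_le_one _)
  · simpa [mul_comm] using ((hasDerivAt_id s).mul_const x).cos

/-- `μ` is the symmetric `Y`-stable law whose characteristic function is `t ↦ exp (-(c * |t| ^ Y))`.
The parameter `c` is the coefficient of `|t| ^ Y`, that is, the `Y`-th power of the usual scale. -/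
def IsSymmetricStable (Y c : ℝ) (μ : Measure ℝ) : Prop :=
  ∀ t, charFun μ t = exp (-(c * |t| ^ Y))

namespace IsSymmetricStable

variable {Y c : ℝ} {μ : Measure ℝ} [IsProbabilityMeasure μ]

lemma integral_cos (h : IsSymmetricStable Y c μ) (t : ℝ) :
    ∫ x, cos (t * x) ∂μ = exp (-(c * |t| ^ Y)) := by
  rw [← re_charFun_eq_integral_cos, h t, Complex.ofReal_re]

lemma measureReal_lt_abs_le (h : IsSymmetricStable Y c μ) (hY : 0 < Y) (hc : 0 ≤ c) {R : ℝ}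
    (hR : 0 < R) : μ.real {x | R < |x|} ≤ 2 ^ (Y + 1) * c * R ^ (-Y) := by
  have hbound : ∀ t ∈ uIoc (-2 * R⁻¹) (2 * R⁻¹), ‖1 - charFun μ t‖ ≤ c * (2 * R⁻¹) ^ Y := by
    intro t ht
    have ht : |t| ≤ 2 * R⁻¹ := by
      rw [uIoc_of_le (by rw [neg_mul]; exact neg_le_self (by positivity))] at ht
      exact abs_le.2 ⟨by linarith [ht.1], ht.2⟩
    rw [h t, ← Complex.ofReal_one, ← Complex.ofReal_sub, Complex.norm_real, norm_sub_rev]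
    exact (abs_exp_neg_sub_one_le (by positivity)).trans (by gcongr)
  calc μ.real {x | R < |x|}
      ≤ 2⁻¹ * R * ‖∫ t in (-2 * R⁻¹)..(2 * R⁻¹), 1 - charFun μ t‖ :=
        measureReal_abs_gt_le_integral_charFun hR
    _ ≤ 2⁻¹ * R * (c * (2 * R⁻¹) ^ Y * |2 * R⁻¹ - -2 * R⁻¹|) := by
      gcongr
      exact intervalIntegral.norm_integral_le_of_norm_le_const hbound
    _ = _ := by
      rw [abs_of_pos (by rw [neg_mul, sub_neg_eq_add]; positivity), mul_rpow zero_le_two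
        (by positivity), inv_rpow hR.le, ← rpow_neg hR.le, rpow_add_one two_ne_zero]
      field_simp
      ring

lemma integrable_abs_rpow (h : IsSymmetricStable Y c μ) (hc : 0 ≤ c) {r : ℝ} (hr : 0 < r)
    (hrY : r < Y) : Integrable (fun x ↦ |x| ^ r) μ :=
  integrable_abs_rpow_of_measureReal_lt_abs_le aemeasurable_id hr hrY fun _ hR ↦
    h.measureReal_lt_abs_le (hr.trans hrY) hc hR

lemma integrable_id (h : IsSymmetricStable Y c μ) (hY : 1 < Y) (hc : 0 ≤ c) :
    Integrable id μ := by
  have := h.integrable_abs_rpow hc one_pos hY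
  simp only [rpow_one] at this
  exact (integrable_norm_iff (by fun_prop)).1 this

lemma integral_mul_sin (h : IsSymmetricStable Y c μ) (hY : 1 < Y) (hc : 0 ≤ c) (u : ℝ) :
    ∫ x, x * sin (u * x) ∂μ = c * Y * |u| ^ (Y - 2) * u * exp (-(c * |u| ^ Y)) := by
  have hderiv := hasDerivAt_integral_cos (h.integrable_id hY hc) u
  simp_rw [h.integral_cos] at hderiv
  have hexp := ((hasDerivAt_abs_rpow u hY).const_mul c).neg.exp
  rw [← neg_eq_iff_eq_neg.2 (hexp.unique hderiv)]
  simp only [Pi.neg_apply]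
  ring

lemma map_neg (h : IsSymmetricStable Y c μ) : μ.map (fun x ↦ -x) = μ := by
  refine Measure.ext_of_charFun (funext fun t ↦ ?_)
  have hneg : (fun x : ℝ ↦ -x) = (-1 * ·) := funext fun x ↦ (neg_one_mul x).symm
  rw [hneg, charFun_map_mul, h, h, neg_one_mul, abs_neg]

lemma isNegInvariant (h : IsSymmetricStable Y c μ) : μ.IsNegInvariant := ⟨h.map_neg⟩

lemma map_prod_eq (h : IsSymmetricStable Y c μ) {a b : ℝ} (hab : |a| ^ Y + |b| ^ Y = 1) :
    (μ.prod μ).map (fun z ↦ a * z.1 + b * z.2) = μ := by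
  have hconv : (μ.prod μ).map (fun z ↦ a * z.1 + b * z.2)
      = (μ.map (a * ·)) ∗ (μ.map (b * ·)) := by
    rw [Measure.conv, Measure.map_prod_map _ _ (by fun_prop) (by fun_prop),
      Measure.map_map (by fun_prop) (by fun_prop)]
    rfl
  have := Measure.isProbabilityMeasure_map (μ := μ) (f := (a * ·)) (by fun_prop)
  have := Measure.isProbabilityMeasure_map (μ := μ) (f := (b * ·)) (by fun_prop)
  rw [hconv]
  refine Measure.ext_of_charFun (funext fun t ↦ ?_)
  rw [charFun_conv, charFun_map_mul, charFun_map_mul, h, h, h, ← Complex.ofReal_mul, ← exp_add,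
    abs_mul, abs_mul, mul_rpow (abs_nonneg a) (abs_nonneg t),
    mul_rpow (abs_nonneg b) (abs_nonneg t)]
  congr 2
  linear_combination -c * |t| ^ Y * hab

lemma add_mem_support (h : IsSymmetricStable Y c μ) {a b x y : ℝ} (hab : |a| ^ Y + |b| ^ Y = 1)
    (hx : x ∈ μ.support) (hy : y ∈ μ.support) : a * x + b * y ∈ μ.support := by
  have := map_mem_support (f := fun z : ℝ × ℝ ↦ a * z.1 + b * z.2) (by fun_prop)
    (mk_mem_support_prod hx hy)
  rwa [h.map_prod_eq hab] at this

lemma exists_ne_zero_mem_support (h : IsSymmetricStable Y c μ) (hc : c ≠ 0) :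
    ∃ x ∈ μ.support, x ≠ 0 := by
  by_contra! hzero
  have hae : ∀ᵐ x ∂μ, x = 0 := mem_of_superset Measure.support_mem_ae hzero
  have hone : ∫ x, cos (1 * x) ∂μ = 1 := by
    rw [integral_congr_ae (g := fun _ ↦ 1) (hae.mono fun x hx ↦ by simp [hx])]
    simp
  rw [h.integral_cos, abs_one, one_rpow, mul_one, exp_eq_one_iff, neg_eq_zero] at hone
  exact hc hone

lemma mem_support_of_abs_le (h : IsSymmetricStable Y c μ) (hY : 0 < Y) {x y : ℝ}
    (hx : x ∈ μ.support) (hyx : |y| ≤ |x|) : y ∈ μ.support := by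
  rcases eq_or_ne x 0 with rfl | hx₀
  · rw [abs_zero, abs_nonpos_iff] at hyx
    rwa [hyx]
  let g : ℝ → ℝ := fun t ↦ t - (1 - t ^ Y) ^ Y⁻¹
  have hg : ContinuousOn g (Icc 0 1) := by
    have := continuous_rpow_const hY.le
    have := continuous_rpow_const (inv_nonneg.2 hY.le)
    fun_prop
  have hg₀ : g 0 = -1 := by simp [g, hY.ne']
  have hg₁ : g 1 = 1 := by simp [g, hY.ne']
  have hyx' : y / x ∈ Icc (g 0) (g 1) := by
    rwa [hg₀, hg₁, mem_Icc, ← abs_le, abs_div, div_le_one (abs_pos.2 hx₀)]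
  obtain ⟨t, ⟨ht₀, ht₁⟩, hgt⟩ := intermediate_value_Icc zero_le_one hg hyx'
  have ht : 0 ≤ 1 - t ^ Y := sub_nonneg.2 (rpow_le_one ht₀ ht₁ hY.le)
  have hab : |t| ^ Y + |-(1 - t ^ Y) ^ Y⁻¹| ^ Y = 1 := by
    rw [abs_neg, abs_of_nonneg ht₀, abs_of_nonneg (rpow_nonneg ht _), rpow_inv_rpow ht hY.ne']
    ring
  convert h.add_mem_support hab hx hx using 1
  rw [← add_mul, ← sub_eq_add_neg]
  exact (div_eq_iff hx₀).1 hgt.symm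

lemma support_eq_univ (h : IsSymmetricStable Y c μ) (hY : 1 < Y) (hc : c ≠ 0) :
    μ.support = univ := by
  have hY₀ : 0 < Y := by linarith
  obtain ⟨x, hx, hx₀⟩ := h.exists_ne_zero_mem_support hc
  -- Sums of two independent copies, rescaled by `2 ^ (-Y⁻¹)`, have law `μ` again, so the support is
  -- closed under multiplication by `κ`.
  let κ : ℝ := 2 ^ (-Y⁻¹) + 2 ^ (-Y⁻¹)
  have hκ : 1 < κ := by
    have : κ = 2 ^ (1 - Y⁻¹) := by
      rw [sub_eq_add_neg, rpow_add two_pos, rpow_one, two_mul]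
    rw [this]
    exact one_lt_rpow one_lt_two (sub_pos.2 (inv_lt_one_of_one_lt₀ hY))
  have hab : |(2 : ℝ) ^ (-Y⁻¹)| ^ Y + |(2 : ℝ) ^ (-Y⁻¹)| ^ Y = 1 := by
    rw [abs_of_pos (by positivity), ← rpow_mul zero_le_two, neg_mul, inv_mul_cancel₀ hY₀.ne',
      rpow_neg_one]
    norm_num
  have hpow (n : ℕ) : κ ^ n * x ∈ μ.support := by
    induction n with
    | zero => simpa using hx
    | succ n ih =>
      convert h.add_mem_support hab ih ih using 1
      ring
  refine eq_univ_of_forall fun y ↦ ?_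
  obtain ⟨n, hn⟩ := pow_unbounded_of_one_lt (|y| / |x|) hκ
  refine h.mem_support_of_abs_le hY₀ (hpow n) ?_
  rw [abs_mul (κ ^ n), abs_of_pos (pow_pos (one_pos.trans hκ) n)]
  exact ((div_lt_iff₀ (abs_pos.2 hx₀)).1 hn).le

lemma integrable_prod_mul_sin_div_gaussianReal (h : IsSymmetricStable Y c μ) (hY : 1 < Y)
    (hc : 0 ≤ c) (a : ℝ) :
    Integrable (fun z : ℝ × ℝ ↦ z.1 * sin (a * z.2 * z.1) / z.2) (μ.prod (gaussianReal 0 1)) := by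
  obtain ⟨r, hr₁, hr⟩ := exists_between (lt_min hY one_lt_two)
  obtain ⟨hrY, hr₂⟩ := lt_min_iff.1 hr
  exact integrable_prod_mul_sin_div hr₁ hr₂.le (h.integrable_abs_rpow hc (by linarith) hrY)
    (integrable_abs_rpow_gaussianReal (by linarith)) a

lemma integral_mul_sin_div (h : IsSymmetricStable Y c μ) (hY : 1 < Y) (hc : 0 ≤ c) {a w : ℝ}
    (ha : 0 < a) (hw : w ≠ 0) :
    ∫ x, x * sin (a * w * x) / w ∂μ
      = c * Y * a ^ (Y - 1) * (|w| ^ (Y - 2) * exp (-(c * (a * |w|) ^ Y))) := by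
  have hpow : a ^ (Y - 1) = a ^ (Y - 2) * a := by
    rw [← rpow_add_one ha.ne']
    ring_nf
  rw [integral_div, h.integral_mul_sin hY hc, abs_mul, abs_of_pos ha,
    mul_rpow ha.le (abs_nonneg w), hpow]
  field_simp

lemma setIntegral_Ioi_mul_gaussianReal_Ioc [NullSingletonClass μ] (h : IsSymmetricStable Y c μ)
    (hY : 1 < Y) (hc : 0 ≤ c) {a : ℝ} (ha : 0 < a) :
    ∫ x in Ioi 0, x * (gaussianReal 0 1).real (Ioc 0 (a * x)) ∂μ
      = c * Y * a ^ (Y - 1) / (2 * √(2 * π))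
        * ∫ w, |w| ^ (Y - 2) * exp (-(c * (a * |w|) ^ Y)) ∂gaussianReal 0 1 := by
  have := h.isNegInvariant
  have hint := h.integrable_prod_mul_sin_div_gaussianReal hY hc a
  have heven : (fun x ↦ ∫ w, x * sin (a * w * x) / w ∂gaussianReal 0 1).Even := fun x ↦ by
    simp only [mul_neg, sin_neg, neg_mul, neg_neg]
  have hae : ∀ᵐ w ∂gaussianReal 0 1, w ≠ 0 := Measure.ae_ne _ 0
  calc ∫ x in Ioi 0, x * (gaussianReal 0 1).real (Ioc 0 (a * x)) ∂μ
      = ∫ x in Ioi 0, (√(2 * π))⁻¹ * ∫ w, x * sin (a * w * x) / w ∂gaussianReal 0 1 ∂μ := by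
        refine setIntegral_congr_fun measurableSet_Ioi fun x hx ↦ ?_
        simp only [mul_div_assoc, mul_right_comm a _ x, integral_const_mul]
        rw [measureReal_gaussianReal_Ioc_eq_integral_sin (mul_pos ha hx).le]
        ring
    _ = (√(2 * π))⁻¹ * ((∫ x, ∫ w, x * sin (a * w * x) / w ∂gaussianReal 0 1 ∂μ) / 2) := by
        rw [integral_const_mul, setIntegral_Ioi_eq_integral_div_two hint.integral_prod_left heven]
    _ = (√(2 * π))⁻¹ * ((∫ w, ∫ x, x * sin (a * w * x) / w ∂μ ∂gaussianReal 0 1) / 2) := by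
        rw [integral_integral_swap hint]
    _ = _ := by
        rw [integral_congr_ae (hae.mono fun w hw ↦ h.integral_mul_sin_div hY hc ha hw),
          integral_const_mul]
        field_simp

lemma integrableOn_mul_gaussianReal_Ioc (h : IsSymmetricStable Y c μ) (hY : 1 < Y) (hc : 0 ≤ c)
    {a : ℝ} (ha : 0 ≤ a) :
    IntegrableOn (fun z ↦ z * (gaussianReal 0 1).real (Ioc 0 (a * z))) (Ioi 0) μ := by
  have hmeas := measurable_measureReal_Ioc_mul (gaussianReal 0 1) ha
  refine ((h.integrable_id hY hc).mul_bdd (c := 1) hmeas.aestronglyMeasurable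
    (ae_of_all _ fun z ↦ ?_)).integrableOn
  rw [norm_of_nonneg measureReal_nonneg]
  exact measureReal_le_one

section Density

variable {C a : ℝ} {p : ℝ → ℝ}

lemma density_nonneg (h : IsSymmetricStable Y c μ) (hY : 1 < Y) (hc : c ≠ 0) (hp : Continuous p)
    (hμ : μ = volume.withDensity fun x ↦ .ofReal (p x)) (x : ℝ) : 0 ≤ p x :=
  nonneg_of_support_withDensity_eq_univ hp (hμ ▸ h.support_eq_univ hY hc) x

lemma integrableOn_density_mul_gaussianReal_Ioc (h : IsSymmetricStable Y c μ) (hY : 1 < Y)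
    (hc : 0 < c) (hp : Continuous p) (hμ : μ = volume.withDensity fun x ↦ .ofReal (p x))
    (ha : 0 ≤ a) :
    IntegrableOn (fun z ↦ p z * (z * (gaussianReal 0 1).real (Ioc 0 (a * z)))) (Ioi 0) := by
  rw [← integrableOn_withDensity_ofReal_iff hp.measurable (h.density_nonneg hY hc.ne' hp hμ)
    measurableSet_Ioi, ← hμ]
  exact h.integrableOn_mul_gaussianReal_Ioc hY hc.le ha

lemma integral_density_mul_gaussianReal_Ioc (h : IsSymmetricStable Y c μ) (hY : 1 < Y)
    (hc : 0 < c) (hp : Continuous p) (hμ : μ = volume.withDensity fun x ↦ .ofReal (p x))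
    (ha : 0 < a) :
    ∫ z in Ioi 0, p z * (z * (gaussianReal 0 1).real (Ioc 0 (a * z)))
      = c * Y * a ^ (Y - 1) / (2 * √(2 * π))
        * ∫ w, |w| ^ (Y - 2) * exp (-(c * (a * |w|) ^ Y)) ∂gaussianReal 0 1 := by
  have : NullSingletonClass μ := hμ ▸ inferInstance
  rw [← h.setIntegral_Ioi_mul_gaussianReal_Ioc hY hc.le ha, ← setIntegral_withDensity_ofReal
    hp.measurable (h.density_nonneg hY hc.ne' hp hμ) _ measurableSet_Ioi, ← hμ]

lemma integrableOn_density_sub_mul_gaussianReal_Ioc (h : IsSymmetricStable Y c μ) (hY₁ : 1 < Y)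
    (hY₂ : Y < 2) (hc : 0 < c) (hp : Continuous p)
    (hμ : μ = volume.withDensity fun x ↦ .ofReal (p x)) (ha : 0 < a) (C : ℝ) :
    IntegrableOn
      (fun z ↦ z * (p z - C * z ^ (-Y - 1)) * (gaussianReal 0 1).real (Ioc 0 (a * z))) (Ioi 0) :=
  ((h.integrableOn_density_mul_gaussianReal_Ioc hY₁ hc hp hμ ha.le).sub
    ((integrableOn_rpow_neg_mul_measureReal_Ioc hY₁ ha
      (integrableOn_Ioi_rpow_gaussianReal (by linarith))).const_mul C)).congr_fun
    (fun z hz ↦ (mul_sub_mul_rpow_mul_eq hz _ _ _ _).symm) measurableSet_Ioi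

lemma integral_density_sub_mul_gaussianReal_Ioc (h : IsSymmetricStable Y c μ) (hY₁ : 1 < Y)
    (hY₂ : Y < 2) (hc : 0 < c) (hcC : c = -2 * C * Gamma (-Y) * cos (π * Y / 2))
    (hp : Continuous p) (hμ : μ = volume.withDensity fun x ↦ .ofReal (p x)) (ha : 0 < a) :
    ∫ z in Ioi 0, z * (p z - C * z ^ (-Y - 1)) * (gaussianReal 0 1).real (Ioc 0 (a * z))
      = c * Y * a ^ (Y - 1) / (2 * √(2 * π))
        * ∫ w, |w| ^ (Y - 2) * (exp (-(c * (a * |w|) ^ Y)) - 1) ∂gaussianReal 0 1 := by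
  have hpow : Integrable (fun w ↦ |w| ^ (Y - 2)) (gaussianReal 0 1) :=
    integrable_abs_rpow_gaussianReal (by linarith)
  have hexp : Integrable (fun w ↦ |w| ^ (Y - 2) * exp (-(c * (a * |w|) ^ Y)))
      (gaussianReal 0 1) := by
    refine hpow.mul_bdd (c := 1) (Measurable.aestronglyMeasurable (by fun_prop))
      (ae_of_all _ fun w ↦ ?_)
    rw [norm_of_nonneg (exp_nonneg _), exp_le_one_iff, neg_nonpos]
    positivity
  have htail := integrableOn_rpow_neg_mul_measureReal_Ioc hY₁ ha
    (integrableOn_Ioi_rpow_gaussianReal (by linarith : -1 < 1 - Y))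
  rw [setIntegral_congr_fun measurableSet_Ioi fun z hz ↦ mul_sub_mul_rpow_mul_eq hz _ _ _ _,
    integral_sub (h.integrableOn_density_mul_gaussianReal_Ioc hY₁ hc hp hμ ha.le)
      (htail.const_mul C), integral_const_mul,
    h.integral_density_mul_gaussianReal_Ioc hY₁ hc hp hμ ha,
    integral_rpow_neg_mul_gaussianReal_Ioc hY₁ hY₂ ha]
  simp only [mul_sub, mul_one]
  rw [integral_sub hexp hpow]
  linear_combination (Y * a ^ (Y - 1) / (2 * √(2 * π)) * ∫ w, |w| ^ (Y - 2) ∂gaussianReal 0 1) * hcC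

lemma tendsto_integral_density_sub_mul_gaussianReal_Ioc (h : IsSymmetricStable Y c μ)
    (hY₁ : 1 < Y) (hY₂ : Y < 2) (hc : 0 < c) (hcC : c = -2 * C * Gamma (-Y) * cos (π * Y / 2))
    (hp : Continuous p) (hμ : μ = volume.withDensity fun x ↦ .ofReal (p x)) :
    Tendsto (fun a ↦ a ^ (-(2 * Y - 1)) * ∫ z in Ioi 0,
        z * (p z - C * z ^ (-Y - 1)) * (gaussianReal 0 1).real (Ioc 0 (a * z)))
      (𝓝[>] 0) (𝓝 (-(c ^ 2 * Y / (2 * √(2 * π)))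
        * ∫ w, |w| ^ (2 * Y - 2) ∂gaussianReal 0 1)) := by
  have hlim := (tendsto_integral_rpow_mul_exp_sub_one (q := Y - 2) (by linarith : 0 < Y)
    (by linarith) hc.le (integrable_abs_rpow_gaussianReal (by linarith))).const_mul
      (c * Y / (2 * √(2 * π)))
  have hexponent : Y - 2 + Y = 2 * Y - 2 := by ring
  rw [hexponent] at hlim
  convert hlim.congr' ?_ using 2
  · ring
  · filter_upwards [self_mem_nhdsWithin] with a ha
    have ha : 0 < a := ha
    have hpow : a ^ (2 * Y - 1) = a ^ Y * a ^ (Y - 1) := by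
      rw [← rpow_add ha]
      ring_nf
    rw [h.integral_density_sub_mul_gaussianReal_Ioc hY₁ hY₂ hc hcC hp hμ ha, rpow_neg ha.le, hpow]
    simp only [← mul_div_assoc, integral_div]
    field_simp

end Density

end IsSymmetricStable

lemma tendsto_div_const_nhdsGT_zero {σ : ℝ} (hσ : 0 < σ) :
    Tendsto (fun s : ℝ ↦ s / σ) (𝓝[>] 0) (𝓝[>] 0) := by
  refine tendsto_nhdsWithin_iff.2 ⟨?_, ?_⟩
  · simpa only [zero_div, id_eq] using
      (tendsto_id.div_const σ : Tendsto (fun s : ℝ ↦ id s / σ) (𝓝 0) _).mono_left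
        nhdsWithin_le_nhds
  · filter_upwards [self_mem_nhdsWithin] with s hs using div_pos hs hσ

lemma measure_nonneg_mul_le_toReal {Ω : Type*} {_ : MeasurableSpace Ω} {P : Measure Ω} {W : Ω → ℝ}
    [NullSingletonClass (P.map W)] (hW : AEMeasurable W P) {σ : ℝ} (hσ : 0 < σ) (s z : ℝ) :
    (P {ω | 0 ≤ σ * W ω ∧ σ * W ω ≤ s * z}).toReal = (P.map W).real (Ioc 0 (s / σ * z)) := by
  have hset : {ω | 0 ≤ σ * W ω ∧ σ * W ω ≤ s * z} = W ⁻¹' Icc 0 (s / σ * z) := by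
    ext ω
    rw [mem_preimage, mem_Icc, mem_ofPred_eq, mul_nonneg_iff_of_pos_left hσ, div_mul_eq_mul_div,
      le_div_iff₀' hσ]
  rw [hset, measureReal_congr Ioc_ae_eq_Icc, measureReal_def,
    Measure.map_apply_of_aemeasurable hW measurableSet_Icc]

end

/-- Gaussian-smoothed second-order stable density correction, weighted version
(limit of `B₁₃⁽³⁾` in the proof of Theorem 3.3). -/
theorem stmt11
    {Ω : Type} [MeasurableSpace Ω] (P : Measure Ω) [IsProbabilityMeasure P]
    (Y C σ c : ℝ) (hY : Y ∈ Set.Ioo (1:ℝ) 2) (hC : 0 < C) (hσ : 0 < σ)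
    (hc : c = -2 * C * Real.Gamma (-Y) * Real.cos (Real.pi * Y / 2))
    (μ : Measure ℝ) [IsProbabilityMeasure μ]
    (hchar : ∀ u : ℝ, (∫ x, Complex.exp (Complex.I * u * x) ∂μ)
      = (Real.exp (-(c * |u| ^ Y)) : ℂ))
    (p : ℝ → ℝ) (hp : Continuous p)
    (hdens : μ = MeasureTheory.volume.withDensity (fun x => ENNReal.ofReal (p x)))
    (W : Ω → ℝ) (hWmeas : Measurable W)
    (hWlaw : Measure.map W P = gaussianReal 0 1)
    (m : ℝ) (hm : m = ∫ ω, |W ω| ^ (2*Y - 2) ∂P) :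
    (∀ s > (0:ℝ), IntegrableOn
        (fun z => z * (p z - C * z ^ (-Y - 1))
          * (P {ω | 0 ≤ σ * W ω ∧ σ * W ω ≤ s * z}).toReal)
        (Set.Ioi 0)) ∧
    Filter.Tendsto
      (fun s => s ^ (-(2*Y - 1)) * ∫ z in Set.Ioi (0:ℝ),
        z * (p z - C * z ^ (-Y - 1))
          * (P {ω | 0 ≤ σ * W ω ∧ σ * W ω ≤ s * z}).toReal)
      (𝓝[>] (0:ℝ))
      (𝓝 (-(2 * C ^ 2 * Y * Real.cos (Real.pi * Y / 2) ^ 2 * Real.Gamma (-Y) ^ 2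
        / (Real.sqrt (2 * Real.pi) * σ ^ (2*Y - 1))) * m)) := by
  obtain ⟨hY₁, hY₂⟩ := hY
  have hc₀ : 0 < c := by linarith [mul_pos hC (neg_Gamma_neg_mul_cos_pos hY₁ hY₂)]
  have hstable : IsSymmetricStable Y c μ := fun t ↦ by
    simp only [charFun_apply_real, ← hchar, mul_comm Complex.I, mul_right_comm]
  have : NullSingletonClass (P.map W) := hWlaw ▸ inferInstance
  simp only [measure_nonneg_mul_le_toReal hWmeas.aemeasurable hσ, hWlaw]
  refine ⟨fun s hs ↦ hstable.integrableOn_density_sub_mul_gaussianReal_Ioc hY₁ hY₂ hc₀ hp hdens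
    (div_pos hs hσ) C, ?_⟩
  have hm' : m = ∫ w, |w| ^ (2 * Y - 2) ∂gaussianReal 0 1 := by
    rw [hm, ← hWlaw, integral_map hWmeas.aemeasurable
      (Measurable.aestronglyMeasurable (by fun_prop))]
  have hlim := ((hstable.tendsto_integral_density_sub_mul_gaussianReal_Ioc hY₁ hY₂ hc₀ hc hp
    hdens).comp (tendsto_div_const_nhdsGT_zero hσ)).const_mul (σ ^ (-(2 * Y - 1)))
  convert hlim.congr' ?_ using 2
  · rw [hm', hc, Real.rpow_neg hσ.le]
    field_simp
  · filter_upwards [self_mem_nhdsWithin] with s hs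
    rw [Function.comp_apply, ← mul_assoc, ← Real.mul_rpow hσ.le (div_pos hs hσ).le,
      mul_div_cancel₀ _ hσ.ne']
end

section
/- Tail-integral representation of the exponential remainder: let V be a real random variable with E[|V|] < ∞ and E[e^{−V}] < ∞. Then E[1 − e^{−V} − V] = ∫₀^∞ (e^{−y} − 1)·P(V ≥ y) dy − ∫₀^∞ (e^{y} − 1)·P(V ≤ −y) dy, and both integrals on the right-hand side are absolutely convergent. -/
open MeasureTheory Filter Topology Set

/-!
Both tail integrals come from one layer cake formula. If `G x = ∫₀ˣ g` with `g ≥ 0` on the right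
and `g ≤ 0` on the left of the origin, then splitting `∫ G ∘ f` over `{0 < f}` and `{f ≤ 0}` and
applying the layer cake formula to `f` and to `-f` gives
`∫ G ∘ f = ∫₀^∞ g t · μ {t ≤ f} dt - ∫₀^∞ g (-t) · μ {f ≤ -t} dt`.
For `g t = 1 - e^(-t)` the primitive is `x - 1 + e^(-x)`.
-/

lemma intervalIntegral_neg_comp_neg {E : Type*} [NormedAddCommGroup E] [NormedSpace ℝ E]
    (g : ℝ → E) (x : ℝ) :
    ∫ t in (0 : ℝ)..-x, -g (-t) = ∫ t in (0 : ℝ)..x, g t := by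
  rw [intervalIntegral.integral_neg, intervalIntegral.integral_comp_neg, neg_neg, neg_zero,
    intervalIntegral.integral_symm, neg_neg]

section LayerCake

variable {α : Type*} [MeasurableSpace α] {μ : Measure α} {f : α → ℝ} {g : ℝ → ℝ}

lemma intervalIntegral_comp_nonneg_of_ae_nonneg (f_nn : 0 ≤ᵐ[μ] f)
    (g_nn : ∀ᵐ t ∂volume.restrict (Ioi 0), 0 ≤ g t) :
    0 ≤ᵐ[μ] fun a => ∫ t in (0 : ℝ)..f a, g t := by
  filter_upwards [f_nn] with a (ha : 0 ≤ f a)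
  rw [intervalIntegral.integral_of_le ha]
  exact integral_nonneg_of_ae (ae_restrict_of_ae_restrict_of_subset Ioc_subset_Ioi_self g_nn)

lemma setLIntegral_measure_le_mul_lt_top (f_nn : 0 ≤ᵐ[μ] f) (f_mble : AEMeasurable f μ)
    (g_intble : ∀ t > 0, IntervalIntegrable g volume 0 t)
    (g_nn : ∀ᵐ t ∂volume.restrict (Ioi 0), 0 ≤ g t)
    (h_intble : Integrable (fun a => ∫ t in (0 : ℝ)..f a, g t) μ) :
    ∫⁻ t in Ioi 0, μ {a | t ≤ f a} * ENNReal.ofReal (g t) < ⊤ := by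
  rw [← lintegral_comp_eq_lintegral_meas_le_mul μ f_nn f_mble g_intble g_nn]
  exact h_intble.lintegral_lt_top

lemma aemeasurable_measure_le_mul (g_intble : ∀ t > 0, IntervalIntegrable g volume 0 t) :
    AEMeasurable (fun t => μ {a | t ≤ f a} * ENNReal.ofReal (g t)) (volume.restrict (Ioi 0)) := by
  have tail_mble : Measurable fun t => μ {a | t ≤ f a} :=
    Antitone.measurable fun _ _ hst => measure_mono fun _ ht => hst.trans ht
  have g_mble : AEMeasurable g (volume.restrict (Ioi 0)) :=
    aemeasurable_Ioi_of_forall_Ioc fun t ht => (g_intble t ht).1.1.aemeasurable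
  exact tail_mble.aemeasurable.mul g_mble.ennreal_ofReal

lemma toReal_measure_le_mul_ae_eq (g_nn : ∀ᵐ t ∂volume.restrict (Ioi 0), 0 ≤ g t) :
    (fun t => (μ {a | t ≤ f a} * ENNReal.ofReal (g t)).toReal)
      =ᵐ[volume.restrict (Ioi 0)] fun t => g t * μ.real {a | t ≤ f a} := by
  filter_upwards [g_nn] with t ht
  rw [ENNReal.toReal_mul, ENNReal.toReal_ofReal ht, mul_comm, measureReal_def]

theorem integrableOn_mul_measureReal_le (f_nn : 0 ≤ᵐ[μ] f) (f_mble : AEMeasurable f μ)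
    (g_intble : ∀ t > 0, IntervalIntegrable g volume 0 t)
    (g_nn : ∀ᵐ t ∂volume.restrict (Ioi 0), 0 ≤ g t)
    (h_intble : Integrable (fun a => ∫ t in (0 : ℝ)..f a, g t) μ) :
    IntegrableOn (fun t => g t * μ.real {a | t ≤ f a}) (Ioi 0) :=
  (integrable_toReal_of_lintegral_ne_top (aemeasurable_measure_le_mul g_intble)
    (setLIntegral_measure_le_mul_lt_top f_nn f_mble g_intble g_nn h_intble).ne).congr
    (toReal_measure_le_mul_ae_eq g_nn)

theorem integral_comp_eq_integral_mul_measureReal_le (f_nn : 0 ≤ᵐ[μ] f)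
    (f_mble : AEMeasurable f μ) (g_intble : ∀ t > 0, IntervalIntegrable g volume 0 t)
    (g_nn : ∀ᵐ t ∂volume.restrict (Ioi 0), 0 ≤ g t)
    (h_intble : Integrable (fun a => ∫ t in (0 : ℝ)..f a, g t) μ) :
    ∫ a, (∫ t in (0 : ℝ)..f a, g t) ∂μ = ∫ t in Ioi 0, g t * μ.real {a | t ≤ f a} := by
  have tail_mble := aemeasurable_measure_le_mul (μ := μ) (f := f) g_intble
  have tail_lt_top : ∀ᵐ t ∂volume.restrict (Ioi 0), μ {a | t ≤ f a} * ENNReal.ofReal (g t) < ⊤ :=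
    ae_lt_top' tail_mble
      (setLIntegral_measure_le_mul_lt_top f_nn f_mble g_intble g_nn h_intble).ne
  calc ∫ a, (∫ t in (0 : ℝ)..f a, g t) ∂μ
      = (∫⁻ a, ENNReal.ofReal (∫ t in (0 : ℝ)..f a, g t) ∂μ).toReal :=
        integral_eq_lintegral_of_nonneg_ae (intervalIntegral_comp_nonneg_of_ae_nonneg f_nn g_nn)
          h_intble.aestronglyMeasurable
    _ = (∫⁻ t in Ioi 0, μ {a | t ≤ f a} * ENNReal.ofReal (g t)).toReal := by
        rw [lintegral_comp_eq_lintegral_meas_le_mul μ f_nn f_mble g_intble g_nn]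
    _ = ∫ t in Ioi 0, (μ {a | t ≤ f a} * ENNReal.ofReal (g t)).toReal :=
        (integral_toReal tail_mble tail_lt_top).symm
    _ = ∫ t in Ioi 0, g t * μ.real {a | t ≤ f a} :=
        integral_congr_ae (toReal_measure_le_mul_ae_eq g_nn)

lemma eqOn_mul_measureReal_restrict_le {s : Set α} (hs : {a | 0 < f a} ⊆ s) :
    EqOn (fun t => g t * (μ.restrict s).real {a | t ≤ f a})
      (fun t => g t * μ.real {a | t ≤ f a}) (Ioi 0) := by
  intro t ht
  have h_sub : {a | t ≤ f a} ⊆ s := fun a ha => hs (lt_of_lt_of_le (mem_Ioi.1 ht) ha)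
  simp only [measureReal_def, Measure.restrict_eq_self μ h_sub]

theorem integrableOn_and_setIntegral_comp_eq_mul_measureReal_le {s : Set α}
    (s_pos : {a | 0 < f a} ⊆ s) (s_nn : ∀ᵐ a ∂μ.restrict s, 0 ≤ f a)
    (f_mble : AEMeasurable f μ) (g_intble : ∀ t > 0, IntervalIntegrable g volume 0 t)
    (g_nn : ∀ᵐ t ∂volume.restrict (Ioi 0), 0 ≤ g t)
    (h_intble : IntegrableOn (fun a => ∫ t in (0 : ℝ)..f a, g t) s μ) :
    IntegrableOn (fun t => g t * μ.real {a | t ≤ f a}) (Ioi 0) ∧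
      ∫ a in s, (∫ t in (0 : ℝ)..f a, g t) ∂μ = ∫ t in Ioi 0, g t * μ.real {a | t ≤ f a} := by
  have h_eq := eqOn_mul_measureReal_restrict_le (μ := μ) (g := g) s_pos
  constructor
  · exact (integrableOn_mul_measureReal_le s_nn f_mble.restrict g_intble g_nn h_intble).congr_fun
      h_eq measurableSet_Ioi
  · rw [integral_comp_eq_integral_mul_measureReal_le s_nn f_mble.restrict g_intble g_nn h_intble,
      setIntegral_congr_fun measurableSet_Ioi h_eq]

theorem integrableOn_and_integral_comp_eq_sub_mul_measureReal (f_mble : AEMeasurable f μ)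
    (g_intble : ∀ t, IntervalIntegrable g volume 0 t)
    (g_nn : ∀ᵐ t ∂volume.restrict (Ioi 0), 0 ≤ g t)
    (g_np : ∀ᵐ t ∂volume.restrict (Ioi 0), g (-t) ≤ 0)
    (h_intble : Integrable (fun a => ∫ t in (0 : ℝ)..f a, g t) μ) :
    IntegrableOn (fun t => g t * μ.real {a | t ≤ f a}) (Ioi 0) ∧
      IntegrableOn (fun t => g (-t) * μ.real {a | f a ≤ -t}) (Ioi 0) ∧
      ∫ a, (∫ t in (0 : ℝ)..f a, g t) ∂μ =
        (∫ t in Ioi 0, g t * μ.real {a | t ≤ f a}) -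
          ∫ t in Ioi 0, g (-t) * μ.real {a | f a ≤ -t} := by
  have pos_null : NullMeasurableSet {a | 0 < f a} μ :=
    nullMeasurableSet_lt aemeasurable_const f_mble
  have neg_nn : ∀ᵐ a ∂μ.restrict {a | 0 < f a}ᶜ, 0 ≤ -f a :=
    (ae_restrict_mem₀ pos_null.compl).mono fun _ ha => neg_nonneg.2 (not_lt.1 ha)
  have neg_pos_subset : {a | 0 < -f a} ⊆ {a | 0 < f a}ᶜ :=
    fun _ ha => notMem_ofPred_iff.2 (not_lt.2 (neg_pos.1 (mem_ofPred.1 ha)).le)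
  have neg_g_intble (t : ℝ) (_ : t > 0) : IntervalIntegrable (fun t => -g (-t)) volume 0 t := by
    have comp_neg_intble := (IntervalIntegrable.iff_comp_neg (by simp)).1 (g_intble (-t))
    rw [neg_zero, neg_neg] at comp_neg_intble
    exact comp_neg_intble.neg
  obtain ⟨right_intble, right_eq⟩ := integrableOn_and_setIntegral_comp_eq_mul_measureReal_le
    Subset.rfl ((ae_restrict_mem₀ pos_null).mono fun _ ha => le_of_lt ha) f_mble
    (fun t _ => g_intble t) g_nn h_intble.integrableOn
  obtain ⟨left_intble, left_eq⟩ := integrableOn_and_setIntegral_comp_eq_mul_measureReal_le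
    (f := fun a => -f a) (g := fun t => -g (-t)) neg_pos_subset neg_nn
    f_mble.neg neg_g_intble (g_np.mono fun _ => neg_nonneg.2)
    (by simpa only [intervalIntegral_neg_comp_neg] using h_intble.integrableOn)
  simp only [intervalIntegral_neg_comp_neg, neg_mul, integral_neg, le_neg] at left_intble left_eq
  refine ⟨right_intble, by simpa using left_intble.neg, ?_⟩
  rw [← integral_add_compl₀ pos_null h_intble, right_eq, left_eq, sub_eq_add_neg]

end LayerCake

lemma integral_one_sub_exp_neg (x : ℝ) :
    ∫ t in (0 : ℝ)..x, (1 - Real.exp (-t)) = -(1 - Real.exp (-x) - x) := by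
  have exp_neg_intble : IntervalIntegrable (fun t => Real.exp (-t)) volume 0 x :=
    Continuous.intervalIntegrable (by fun_prop) 0 x
  rw [intervalIntegral.integral_sub intervalIntegrable_const exp_neg_intble,
    intervalIntegral.integral_comp_neg Real.exp, integral_exp, intervalIntegral.integral_const,
    neg_zero, Real.exp_zero, smul_eq_mul]
  ring

theorem stmt13_general {Ω : Type*} [MeasurableSpace Ω] {μ : Measure Ω} {V : Ω → ℝ}
    (hV : AEMeasurable V μ) (hVrem : Integrable (fun ω => 1 - Real.exp (-V ω) - V ω) μ) :
    IntegrableOn (fun y => (Real.exp (-y) - 1) * μ.real {ω | y ≤ V ω}) (Ioi 0) ∧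
      IntegrableOn (fun y => (Real.exp y - 1) * μ.real {ω | V ω ≤ -y}) (Ioi 0) ∧
      ∫ ω, (1 - Real.exp (-V ω) - V ω) ∂μ =
        (∫ y in Ioi 0, (Real.exp (-y) - 1) * μ.real {ω | y ≤ V ω}) -
          ∫ y in Ioi 0, (Real.exp y - 1) * μ.real {ω | V ω ≤ -y} := by
  have g_nn : ∀ t ∈ Ioi (0 : ℝ), 0 ≤ 1 - Real.exp (-t) := fun t ht => by
    simpa using (mem_Ioi.1 ht).le
  have g_np : ∀ t ∈ Ioi (0 : ℝ), 1 - Real.exp (-(-t)) ≤ 0 := fun t ht => by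
    simpa using (mem_Ioi.1 ht).le
  obtain ⟨right_intble, left_intble, h_eq⟩ :=
    integrableOn_and_integral_comp_eq_sub_mul_measureReal
      (g := fun t => 1 - Real.exp (-t)) hV
      (fun t => Continuous.intervalIntegrable (by fun_prop) 0 t)
      (ae_restrict_of_forall_mem measurableSet_Ioi g_nn)
      (ae_restrict_of_forall_mem measurableSet_Ioi g_np)
      (by simp only [integral_one_sub_exp_neg]; exact hVrem.neg)
  have right_neg (y : ℝ) : (Real.exp (-y) - 1) * μ.real {ω | y ≤ V ω} =
      -((1 - Real.exp (-y)) * μ.real {ω | y ≤ V ω}) := by ring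
  have left_neg (y : ℝ) : (Real.exp y - 1) * μ.real {ω | V ω ≤ -y} =
      -((1 - Real.exp (-(-y))) * μ.real {ω | V ω ≤ -y}) := by rw [neg_neg]; ring
  simp only [integral_one_sub_exp_neg, integral_neg] at h_eq
  simp only [right_neg, left_neg, integral_neg]
  exact ⟨right_intble.neg, left_intble.neg, by linarith⟩

/-- Tail-integral representation of the exponential remainder: if `E[|V|] < ∞` and
`E[e^(−V)] < ∞`, then
`E[1 − e^(−V) − V] = ∫₀^∞ (e^(−y) − 1)·P(V ≥ y) dy − ∫₀^∞ (e^y − 1)·P(V ≤ −y) dy`,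
and both integrals on the right-hand side are absolutely convergent. -/
theorem stmt13
    {Ω : Type} [MeasurableSpace Ω] (P : Measure Ω) [IsProbabilityMeasure P]
    (V : Ω → ℝ) (hVmeas : Measurable V)
    (hVint : Integrable V P)
    (hVexp : Integrable (fun ω => Real.exp (-V ω)) P) :
    IntegrableOn (fun y => (Real.exp (-y) - 1) * (P {ω | y ≤ V ω}).toReal) (Set.Ioi 0) ∧
    IntegrableOn (fun y => (Real.exp y - 1) * (P {ω | V ω ≤ -y}).toReal) (Set.Ioi 0) ∧
    (∫ ω, (1 - Real.exp (-V ω) - V ω) ∂P) =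
      (∫ y in Set.Ioi (0:ℝ), (Real.exp (-y) - 1) * (P {ω | y ≤ V ω}).toReal)
      - ∫ y in Set.Ioi (0:ℝ), (Real.exp y - 1) * (P {ω | V ω ≤ -y}).toReal := by
  exact stmt13_general hVmeas.aemeasurable (((integrable_const 1).sub hVexp).sub hVint)
end

section
/- Pointwise scaling limit of the joint stable probability (display (NdedLmt2)): for every fixed x > 0 and w > 0, lim_{t→0⁺} t^{−1}·P( U − V ≥ t^{1/2−1/Y}·w and M*·U + G*·V ≤ t^{−1/Y}·x ≤ M·U + G·V ) = (C/Y)·(M^Y − (M−1)^Y)·x^{−Y}. -/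
open MeasureTheory ProbabilityTheory Filter Topology Set

/-! Only one large jump of `U` matters. With `s = t ^ (-1/Y)` the claim is that `s ^ Y` times the
probability converges as `s → ∞`. For fixed `v` the condition on `U` given `V = v` is, for large
`s`, that `U` lies in the interval from `(s x - G v) / M` to `(s x - (G + 1) v) / (M - 1)`, because
the threshold `s ^ (1 - Y/2) w` is `o(s)`. So the limit comes from the tail
`s ^ Y * μ [s, ∞) → C / Y` of the law `μ` of `U`, and dominated convergence in `v` applies since
the event forces `U ≥ c s` uniformly in `v`.

The tail is obtained by testing `μ` against smooth functions. The Lévy–Khintchine integral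
`∫ (exp (z x) - 1 - z x) x ^ (-Y - 1) dx = Γ(-Y) (-z) ^ Y` is twice integrated by parts to Euler's
integral for `Re z < 0` and extended to `z = i u` by continuity. Fourier inversion then turns
`s ^ Y (exp (ψ (u / s)) - 1) → ψ u` into
`s ^ Y (∫ f (x / s) dμ - f 0) → C ∫ (f x - f 0 - x f' 0) x ^ (-Y - 1) dx` for Schwartz `f`, and
bump functions squeeze the indicator of `[1, ∞)`.
-/

open scoped FourierTransform SchwartzMap

section PowerWeights

variable {p α β : ℝ}

lemma integrableOn_rpow_mul_min_rpow (hβ : β < p) (hα : p < α) :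
    IntegrableOn (fun x : ℝ => x ^ (-p - 1) * min (x ^ α) (x ^ β)) (Ioi 0) := by
  have hmeas : Measurable fun x : ℝ => x ^ (-p - 1) * min (x ^ α) (x ^ β) := by fun_prop
  have bound_rpow : ∀ {γ x : ℝ}, 0 < x → min (x ^ α) (x ^ β) ≤ x ^ γ →
      ‖x ^ (-p - 1) * min (x ^ α) (x ^ β)‖ ≤ x ^ (γ - p - 1) := fun {γ x} hx h => by
    rw [Real.norm_of_nonneg (by positivity), show γ - p - 1 = (-p - 1) + γ by ring,
      Real.rpow_add hx]
    gcongr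
  rw [← Ioc_union_Ioi_eq_Ioi zero_le_one]
  refine IntegrableOn.union ?_ ?_
  · have hint : IntegrableOn (fun x : ℝ => x ^ (α - p - 1)) (Ioc 0 1) :=
      (intervalIntegrable_iff_integrableOn_Ioc_of_le zero_le_one).1
        (intervalIntegral.intervalIntegrable_rpow' (by linarith))
    refine hint.mono' hmeas.aestronglyMeasurable ?_
    exact ae_restrict_of_forall_mem measurableSet_Ioc fun x hx => bound_rpow hx.1 (min_le_left _ _)
  · have hint : IntegrableOn (fun x : ℝ => x ^ (β - p - 1)) (Ioi 1) :=
      integrableOn_Ioi_rpow_of_lt (by linarith) one_pos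
    refine hint.mono' hmeas.aestronglyMeasurable ?_
    exact ae_restrict_of_forall_mem measurableSet_Ioi fun x hx =>
      bound_rpow (one_pos.trans hx) (min_le_right _ _)

lemma tendsto_rpow_neg_mul_min_rpow_nhdsGT (hα : p < α) :
    Tendsto (fun x : ℝ => x ^ (-p) * min (x ^ α) (x ^ β)) (𝓝[>] 0) (𝓝 0) := by
  have h : Tendsto (fun x : ℝ => x ^ (α - p)) (𝓝[>] 0) (𝓝 0) := by
    have h0 := (Real.continuousAt_rpow_const 0 (α - p) (.inr (sub_pos.2 hα).le)).tendsto
    rw [Real.zero_rpow (sub_pos.2 hα).ne'] at h0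
    exact h0.mono_left nhdsWithin_le_nhds
  refine squeeze_zero' ?_ ?_ h <;> filter_upwards [self_mem_nhdsWithin] with x hx
  · have : 0 < x := hx
    positivity
  · rw [sub_eq_neg_add, Real.rpow_add hx]
    exact mul_le_mul_of_nonneg_left (min_le_left _ _) (Real.rpow_nonneg (le_of_lt hx) _)

lemma tendsto_rpow_neg_mul_min_rpow_atTop (hβ : β < p) :
    Tendsto (fun x : ℝ => x ^ (-p) * min (x ^ α) (x ^ β)) atTop (𝓝 0) := by
  refine squeeze_zero' ?_ ?_ (tendsto_rpow_neg_atTop (sub_pos.2 hβ)) <;>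
    filter_upwards [eventually_gt_atTop 0] with x hx
  · positivity
  · rw [neg_sub, sub_eq_neg_add, Real.rpow_add hx]
    exact mul_le_mul_of_nonneg_left (min_le_right _ _) (Real.rpow_nonneg hx.le _)

lemma integrableOn_rpow_mul_of_norm_le {g : ℝ → ℂ} {A : ℝ} (hβ : β < p) (hα : p < α)
    (hg : AEStronglyMeasurable g (volume.restrict (Ioi 0)))
    (hbound : ∀ x ∈ Ioi (0 : ℝ), ‖g x‖ ≤ A * min (x ^ α) (x ^ β)) :
    IntegrableOn (fun x => ((x ^ (-p - 1) : ℝ) : ℂ) * g x) (Ioi 0) := by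
  have hmeas : Measurable fun x : ℝ => ((x ^ (-p - 1) : ℝ) : ℂ) := by fun_prop
  refine ((integrableOn_rpow_mul_min_rpow hβ hα).const_mul A).mono'
    (hmeas.aestronglyMeasurable.mul hg) (ae_restrict_of_forall_mem measurableSet_Ioi fun x hx => ?_)
  have hx0 : 0 ≤ x ^ (-p - 1) := Real.rpow_nonneg (le_of_lt hx) _
  calc ‖((x ^ (-p - 1) : ℝ) : ℂ) * g x‖ = x ^ (-p - 1) * ‖g x‖ := by
        rw [norm_mul, Complex.norm_of_nonneg hx0]
    _ ≤ x ^ (-p - 1) * (A * min (x ^ α) (x ^ β)) := by gcongr; exact hbound x hx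
    _ = A * (x ^ (-p - 1) * min (x ^ α) (x ^ β)) := by ring

lemma integral_rpow_mul_eq_integral_rpow_mul_deriv {g g' : ℝ → ℂ} {A B : ℝ} (hp : p ≠ 0)
    (hβ : β < p) (hα : p < α) (hderiv : ∀ x ∈ Ioi (0 : ℝ), HasDerivAt g (g' x) x)
    (hg : ∀ x ∈ Ioi (0 : ℝ), ‖g x‖ ≤ A * min (x ^ α) (x ^ β))
    (hg' : ∀ x ∈ Ioi (0 : ℝ), ‖g' x‖ ≤ B * min (x ^ (α - 1)) (x ^ (β - 1))) :
    ∫ x in Ioi (0 : ℝ), ((x ^ (-p - 1) : ℝ) : ℂ) * g x =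
      (p : ℂ)⁻¹ * ∫ x in Ioi (0 : ℝ), ((x ^ (-p) : ℝ) : ℂ) * g' x := by
  have hpC : (p : ℂ) ≠ 0 := by exact_mod_cast hp
  have hgmeas : AEStronglyMeasurable g (volume.restrict (Ioi 0)) :=
    ContinuousOn.aestronglyMeasurable
      (fun x hx => (hderiv x hx).continuousAt.continuousWithinAt) measurableSet_Ioi
  have hg'meas : AEStronglyMeasurable g' (volume.restrict (Ioi 0)) :=
    (measurable_deriv g).aestronglyMeasurable.congr
      (ae_restrict_of_forall_mem measurableSet_Ioi fun x hx => (hderiv x hx).deriv)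
  have hweight : ∀ x ∈ Ioi (0 : ℝ), HasDerivAt (fun x : ℝ => ((x ^ (-p) : ℝ) : ℂ))
      (-p * ((x ^ (-p - 1) : ℝ) : ℂ)) x := fun x hx => by
    simpa using (Real.hasDerivAt_rpow_const (p := -p) (.inl (ne_of_gt hx))).ofReal_comp
  have hint : IntegrableOn (fun x => ((x ^ (-p - 1) : ℝ) : ℂ) * g x) (Ioi 0) :=
    integrableOn_rpow_mul_of_norm_le hβ hα hgmeas hg
  have hint' : IntegrableOn (fun x => ((x ^ (-p) : ℝ) : ℂ) * g' x) (Ioi 0) := by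
    simpa using integrableOn_rpow_mul_of_norm_le (sub_lt_sub_right hβ 1) (sub_lt_sub_right hα 1)
      hg'meas hg'
  have boundary : ∀ {l : Filter ℝ}, (∀ᶠ x in l, x ∈ Ioi (0 : ℝ)) →
      Tendsto (fun x : ℝ => x ^ (-p) * min (x ^ α) (x ^ β)) l (𝓝 0) →
      Tendsto ((fun x : ℝ => ((x ^ (-p) : ℝ) : ℂ)) * g) l (𝓝 0) := fun hl hlim => by
    refine squeeze_zero_norm' ?_ (by simpa using hlim.const_mul A)
    filter_upwards [hl] with x hx
    have hx0 : 0 ≤ x ^ (-p) := Real.rpow_nonneg (le_of_lt hx) _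
    rw [Pi.mul_apply, norm_mul, Complex.norm_of_nonneg hx0, mul_left_comm]
    exact mul_le_mul_of_nonneg_left (hg x hx) hx0
  have hparts := integral_Ioi_mul_deriv_eq_deriv_mul hweight hderiv hint'
    (by simp only [Pi.mul_def, mul_assoc]; exact hint.const_mul (-p : ℂ))
    (boundary self_mem_nhdsWithin (tendsto_rpow_neg_mul_min_rpow_nhdsGT hα))
    (boundary (eventually_gt_atTop 0) (tendsto_rpow_neg_mul_min_rpow_atTop hβ))
  simp only [mul_assoc, integral_const_mul] at hparts
  rw [hparts]
  field_simp
  ring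

end PowerWeights

section LevyKhintchine

variable {z : ℂ}

lemma norm_exp_le_one_of_re_nonpos (hz : z.re ≤ 0) : ‖Complex.exp z‖ ≤ 1 := by
  rw [Complex.norm_exp]
  exact Real.exp_le_one_iff.2 hz

lemma norm_exp_sub_one_le_of_re_nonpos (hz : z.re ≤ 0) :
    ‖Complex.exp z - 1‖ ≤ 2 * min ‖z‖ 1 := by
  rcases le_total ‖z‖ 1 with h | h
  · rw [min_eq_left h]
    exact Complex.norm_exp_sub_one_le h
  · rw [min_eq_right h]
    linarith [norm_sub_le (Complex.exp z) 1, norm_exp_le_one_of_re_nonpos hz,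
      norm_one (α := ℂ)]

lemma norm_exp_sub_one_sub_id_le_of_re_nonpos (hz : z.re ≤ 0) :
    ‖Complex.exp z - 1 - z‖ ≤ 3 * min (‖z‖ ^ 2) ‖z‖ := by
  rcases le_total ‖z‖ 1 with h | h
  · rw [min_eq_left (pow_le_of_le_one (norm_nonneg z) h two_ne_zero)]
    linarith [Complex.norm_exp_sub_one_sub_id_le h, sq_nonneg ‖z‖]
  · rw [min_eq_right (le_self_pow₀ h two_ne_zero)]
    linarith [norm_sub_le (Complex.exp z - 1) z, norm_exp_sub_one_le_of_re_nonpos hz,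
      min_le_right ‖z‖ 1]

variable {x : ℝ}

lemma re_mul_ofReal_nonpos (hz : z.re ≤ 0) (hx : 0 ≤ x) : (z * x).re ≤ 0 := by
  rw [Complex.re_mul_ofReal]
  exact mul_nonpos_of_nonpos_of_nonneg hz hx

lemma norm_exp_mul_sub_one_sub_le (hz : z.re ≤ 0) (hx : 0 < x) :
    ‖Complex.exp (z * x) - 1 - z * x‖ ≤ 3 * (1 + ‖z‖ ^ 2) * min (x ^ (2 : ℝ)) (x ^ (1 : ℝ)) := by
  have hnorm : ‖z * x‖ = ‖z‖ * x := by rw [norm_mul, Complex.norm_of_nonneg hx.le]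
  have hK : ‖z‖ ≤ 1 + ‖z‖ ^ 2 := by nlinarith [sq_nonneg (‖z‖ - 1)]
  refine (norm_exp_sub_one_sub_id_le_of_re_nonpos (re_mul_ofReal_nonpos hz hx.le)).trans ?_
  rw [hnorm, mul_assoc, Real.rpow_two, Real.rpow_one,
    mul_min_of_nonneg (x ^ 2) x (by positivity : 0 ≤ 1 + ‖z‖ ^ 2), mul_pow]
  gcongr
  linarith

lemma norm_exp_mul_sub_one_le (hz : z.re ≤ 0) (hx : 0 < x) :
    ‖Complex.exp (z * x) - 1‖ ≤ 2 * (1 + ‖z‖) * min (x ^ (1 : ℝ)) (x ^ (0 : ℝ)) := by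
  have hnorm : ‖z * x‖ = ‖z‖ * x := by rw [norm_mul, Complex.norm_of_nonneg hx.le]
  refine (norm_exp_sub_one_le_of_re_nonpos (re_mul_ofReal_nonpos hz hx.le)).trans ?_
  rw [hnorm, mul_assoc, Real.rpow_one, Real.rpow_zero,
    mul_min_of_nonneg x 1 (by positivity : 0 ≤ 1 + ‖z‖)]
  gcongr <;> linarith [norm_nonneg z]

lemma norm_exp_mul_le (hz : z.re < 0) (hx : 0 < x) :
    ‖Complex.exp (z * x)‖ ≤ (1 + (-z.re)⁻¹) * min (x ^ (0 : ℝ)) (x ^ (-1 : ℝ)) := by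
  have hr : 0 < -z.re := neg_pos.2 hz
  have hinv : 0 < (-z.re)⁻¹ := inv_pos.2 hr
  have hexp : Real.exp (z.re * x) ≤ (-z.re)⁻¹ * x⁻¹ := by
    rw [← mul_inv, ← neg_neg (z.re * x), Real.exp_neg, ← neg_mul]
    gcongr
    linarith [Real.add_one_le_exp (-z.re * x)]
  rw [Real.rpow_zero, Real.rpow_neg_one, mul_min_of_nonneg _ _ (by positivity), Complex.norm_exp,
    Complex.re_mul_ofReal]
  have hone : Real.exp (z.re * x) ≤ 1 :=
    Real.exp_le_one_iff.2 (mul_nonpos_of_nonpos_of_nonneg hz.le hx.le)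
  refine le_min ?_ ?_
  · linarith
  · linarith [inv_pos.2 hx, add_mul 1 (-z.re)⁻¹ x⁻¹]

lemma hasDerivAt_exp_mul_ofReal (z : ℂ) (x : ℝ) :
    HasDerivAt (fun x : ℝ => Complex.exp (z * x)) (z * Complex.exp (z * x)) x := by
  have h := ((hasDerivAt_id (x : ℂ)).const_mul z).cexp.comp_ofReal
  simpa [mul_comm] using h

lemma eq_of_analyticOnNhd_of_forall_neg {f g : ℂ → ℂ} (hf : AnalyticOnNhd ℂ f {z | z.re < 0})
    (hg : AnalyticOnNhd ℂ g {z | z.re < 0}) (h : ∀ r : ℝ, r < 0 → f r = g r) (hz : z.re < 0) :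
    f z = g z := by
  refine AnalyticOnNhd.eqOn_of_preconnected_of_frequently_eq hf hg
    (convex_halfSpace_re_lt 0).isPreconnected (z₀ := ((-1 : ℝ) : ℂ)) (by simp) ?_ hz
  have hreal : ∃ᶠ r : ℝ in 𝓝[≠] (-1), f r = g r :=
    ((eventually_nhdsWithin_of_eventually_nhds (eventually_lt_nhds neg_one_lt_zero)).mono
      h).frequently
  have hlim : Tendsto ((↑) : ℝ → ℂ) (𝓝[≠] (-1)) (𝓝[≠] ((-1 : ℝ) : ℂ)) :=
    Complex.continuous_ofReal.continuousAt.continuousWithinAt.tendsto_nhdsWithin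
      fun r hr => by simpa [← Complex.ofReal_one, ← Complex.ofReal_neg] using hr
  exact hlim.frequently hreal

-- Both sides are analytic in `z`, the left one being the complex moment generating function of
-- `x ^ (a - 1) dx` on `(0, ∞)`, so Euler's integral extends from the negative reals.
lemma integral_rpow_mul_exp_mul_Ioi {a : ℝ} (ha : 0 < a) (hz : z.re < 0) :
    ∫ x in Ioi (0 : ℝ), ((x ^ (a - 1) : ℝ) : ℂ) * Complex.exp (z * x) =
      (Real.Gamma a : ℂ) * (-z) ^ (-a : ℂ) := by
  set μ : Measure ℝ := (volume.restrict (Ioi 0)).withDensity fun x => ENNReal.ofReal (x ^ (a - 1))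
  have hmgf : ∀ w : ℂ, complexMGF id μ w =
      ∫ x in Ioi (0 : ℝ), ((x ^ (a - 1) : ℝ) : ℂ) * Complex.exp (w * x) := fun w => by
    rw [complexMGF, integral_withDensity_eq_integral_toReal_smul (by fun_prop) (by simp)]
    refine setIntegral_congr_fun measurableSet_Ioi fun x hx => ?_
    simp [ENNReal.toReal_ofReal (Real.rpow_nonneg (le_of_lt hx) _)]
  have hneg : ∀ r : ℝ, r < 0 →
      complexMGF id μ r = (Real.Gamma a : ℂ) * (-(r : ℂ)) ^ (-a : ℂ) := fun r hr => by
    have hEuler := Complex.integral_cpow_mul_exp_neg_mul_Ioi (a := a) (by simpa using ha)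
      (neg_pos.2 hr)
    have harg : ((-r : ℝ) : ℂ).arg ≠ Real.pi := by
      rw [Complex.arg_ofReal_of_nonneg (neg_pos.2 hr).le]
      exact Real.pi_ne_zero.symm
    rw [one_div, Complex.inv_cpow _ _ harg, ← Complex.cpow_neg, mul_comm,
      Complex.Gamma_ofReal] at hEuler
    rw [hmgf, ← Complex.ofReal_neg, ← hEuler]
    refine setIntegral_congr_fun measurableSet_Ioi fun x hx => ?_
    simp [Complex.ofReal_cpow (le_of_lt hx)]
  have hsubset : Iio 0 ⊆ interior (integrableExpSet id μ) :=
    interior_maximal (fun r hr => Integrable.of_integral_ne_zero (μ := μ) <| by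
      have : mgf id μ r ≠ 0 := by
        have hpos : (-(r : ℂ)) ≠ 0 := by simpa using ne_of_lt hr
        rw [← Complex.ofReal_ne_zero, ← complexMGF_ofReal, hneg r hr]
        simp [(Real.Gamma_pos_of_pos ha).ne', hpos]
      exact this) isOpen_Iio
  rw [← hmgf]
  refine eq_of_analyticOnNhd_of_forall_neg
    (g := fun w => (Real.Gamma a : ℂ) * (-w) ^ (-a : ℂ))
    (analyticOnNhd_complexMGF.mono fun w hw => hsubset hw)
    (fun w hw => ?_) hneg hz
  have hw' : -w ∈ Complex.slitPlane := .inl (by simpa using hw)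
  exact analyticAt_const.mul (analyticAt_id.neg.cpow analyticAt_const hw')

lemma integral_rpow_mul_exp_sub_one_eq {Y : ℝ} (hY : Y ∈ Ioo (1 : ℝ) 2) (hz : z.re < 0) :
    ∫ x in Ioi (0 : ℝ), ((x ^ (-Y) : ℝ) : ℂ) * (Complex.exp (z * x) - 1) =
      (Y - 1 : ℂ)⁻¹ * (z * ((Real.Gamma (2 - Y) : ℂ) * (-z) ^ (Y - 2 : ℂ))) := by
  have hparts := integral_rpow_mul_eq_integral_rpow_mul_deriv (p := Y - 1) (α := 1) (β := 0)
    (by linarith [hY.1]) (by linarith [hY.1]) (by linarith [hY.2])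
    (fun x _ => (hasDerivAt_exp_mul_ofReal z x).sub_const 1)
    (fun x hx => norm_exp_mul_sub_one_le hz.le hx) (B := ‖z‖ * (1 + (-z.re)⁻¹)) (fun x hx => by
      rw [norm_mul, mul_assoc, sub_self, zero_sub]
      gcongr
      exact norm_exp_mul_le hz hx)
  have hEuler := integral_rpow_mul_exp_mul_Ioi (a := 2 - Y) (by linarith [hY.2]) hz
  rw [show -(Y - 1) - 1 = -Y by ring, show -(Y - 1) = 2 - Y - 1 by ring] at hparts
  simp only [mul_left_comm _ z, integral_const_mul, hEuler] at hparts
  rw [mul_left_comm]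
  simpa using hparts

lemma integral_rpow_mul_exp_sub_one_sub_of_re_neg {Y : ℝ} (hY : Y ∈ Ioo (1 : ℝ) 2)
    (hz : z.re < 0) :
    ∫ x in Ioi (0 : ℝ), ((x ^ (-Y - 1) : ℝ) : ℂ) * (Complex.exp (z * x) - 1 - z * x) =
      (Real.Gamma (-Y) : ℂ) * (-z) ^ (Y : ℂ) := by
  obtain ⟨hY1, hY2⟩ := hY
  have hY0 : (Y : ℂ) ≠ 0 := by exact_mod_cast (by linarith : Y ≠ 0)
  have hY10 : (Y : ℂ) - 1 ≠ 0 := by exact_mod_cast (by linarith : Y - 1 ≠ 0)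
  have hz0 : -z ≠ 0 := fun h => by simp [neg_eq_zero.1 h] at hz
  have hGamma : Real.Gamma (2 - Y) = Y * (Y - 1) * Real.Gamma (-Y) := by
    rw [show 2 - Y = -Y + 1 + 1 by ring, Real.Gamma_add_one (by linarith),
      Real.Gamma_add_one (by linarith)]
    ring
  have hderiv : ∀ x : ℝ, HasDerivAt (fun x : ℝ => Complex.exp (z * x) - 1 - z * x)
      (z * (Complex.exp (z * x) - 1)) x := fun x => by
    have hlin : HasDerivAt (fun x : ℝ => z * (x : ℂ)) z x := by
      simpa using (hasDerivAt_id x).ofReal_comp.const_mul z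
    rw [mul_sub, mul_one]
    exact ((hasDerivAt_exp_mul_ofReal z x).sub_const 1).sub hlin
  have hparts := integral_rpow_mul_eq_integral_rpow_mul_deriv (p := Y) (α := 2) (β := 1)
    (by linarith) hY1 hY2 (fun x _ => hderiv x)
    (fun x hx => norm_exp_mul_sub_one_sub_le hz.le hx) (B := ‖z‖ * (2 * (1 + ‖z‖)))
    (fun x hx => by
      rw [norm_mul, mul_assoc, sub_self, show (2 : ℝ) - 1 = 1 by norm_num]
      gcongr
      exact norm_exp_mul_sub_one_le hz.le hx)
  simp only [mul_left_comm _ z, integral_const_mul,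
    integral_rpow_mul_exp_sub_one_eq ⟨hY1, hY2⟩ hz] at hparts
  rw [hparts, hGamma, Complex.cpow_sub _ _ hz0, Complex.cpow_ofNat]
  push_cast
  have hz0' : z ≠ 0 := neg_ne_zero.1 hz0
  field_simp

lemma integral_rpow_mul_exp_sub_one_sub {Y : ℝ} (hY : Y ∈ Ioo (1 : ℝ) 2) (hz : z.re ≤ 0) :
    ∫ x in Ioi (0 : ℝ), ((x ^ (-Y - 1) : ℝ) : ℂ) * (Complex.exp (z * x) - 1 - z * x) =
      (Real.Gamma (-Y) : ℂ) * (-z) ^ (Y : ℂ) := by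
  have hlim : Tendsto (fun ε : ℝ => z - ε) (𝓝[>] 0) (𝓝 z) := by
    have h : ContinuousAt (fun ε : ℝ => z - ε) 0 := by fun_prop
    simpa using h.tendsto.mono_left nhdsWithin_le_nhds
  have hre : ∀ {ε : ℝ}, 0 < ε → (z - ε).re < 0 := fun hε => by simpa using by linarith
  refine tendsto_nhds_unique (f := fun ε : ℝ => ∫ x in Ioi (0 : ℝ), ((x ^ (-Y - 1) : ℝ) : ℂ) *
    (Complex.exp ((z - ε) * x) - 1 - (z - ε) * x)) (l := 𝓝[>] 0) ?_ ?_
  · have hint := (integrableOn_rpow_mul_min_rpow hY.1 hY.2).const_mul (3 * (1 + (‖z‖ + 1) ^ 2))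
    refine tendsto_integral_filter_of_dominated_convergence _ ?_ ?_ hint ?_
    · exact .of_forall fun ε => by fun_prop
    · filter_upwards [self_mem_nhdsWithin, nhdsWithin_le_nhds (eventually_lt_nhds one_pos)]
        with ε (hε : 0 < ε) hε1
      refine ae_restrict_of_forall_mem measurableSet_Ioi fun x (hx : 0 < x) => ?_
      have hnorm : ‖z - ε‖ ≤ ‖z‖ + 1 := by
        refine (norm_sub_le _ _).trans ?_
        rw [Complex.norm_of_nonneg hε.le]
        linarith
      have hbound := norm_exp_mul_sub_one_sub_le (hre hε).le hx
      rw [norm_mul, Complex.norm_of_nonneg (by positivity), mul_left_comm]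
      gcongr
      exact hbound.trans (by gcongr)
    · refine .of_forall fun x => ?_
      have h : Continuous fun w : ℂ =>
        ((x ^ (-Y - 1) : ℝ) : ℂ) * (Complex.exp (w * x) - 1 - w * x) := by fun_prop
      exact (h.tendsto z).comp hlim
  · have hcont : ContinuousAt (fun w : ℂ => w ^ (Y : ℂ)) (-z) :=
      Complex.continuousAt_cpow_const_of_re_pos (.inl (by simpa using hz))
        (by simpa using one_pos.trans hY.1)
    refine ((hcont.tendsto.comp hlim.neg).const_mul (Real.Gamma (-Y) : ℂ)).congr' ?_
    filter_upwards [self_mem_nhdsWithin] with ε hε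
    exact (integral_rpow_mul_exp_sub_one_sub_of_re_neg hY (hre hε)).symm

end LevyKhintchine

lemma neg_I_mul_ofReal_cpow {Y : ℝ} (hY : Y ≠ 0) (u : ℝ) :
    (-(Complex.I * u)) ^ (Y : ℂ) = ((|u| ^ Y : ℝ) : ℂ) * (((Real.cos (Real.pi * Y / 2) : ℝ) : ℂ) -
      Complex.I * ((Real.sign u : ℝ) : ℂ) * ((Real.sin (Real.pi * Y / 2) : ℝ) : ℂ)) := by
  have hnorm : ‖-(Complex.I * u)‖ = |u| := by simp
  rw [Complex.cpow_ofReal, hnorm]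
  rcases lt_trichotomy u 0 with hu | rfl | hu
  · have harg : (-(Complex.I * u)).arg = Real.pi / 2 := by
      rw [show -(Complex.I * u) = ((-u : ℝ) : ℂ) * Complex.I by push_cast; ring,
        Complex.arg_real_mul _ (neg_pos.2 hu), Complex.arg_I]
    rw [harg, Real.sign_of_neg hu, show Real.pi / 2 * Y = Real.pi * Y / 2 by ring]
    push_cast
    ring
  · simp [Real.zero_rpow hY]
  · have harg : (-(Complex.I * u)).arg = -(Real.pi / 2) := by
      rw [show -(Complex.I * u) = (u : ℂ) * -Complex.I by ring, Complex.arg_real_mul _ hu,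
        Complex.arg_neg_I]
    rw [harg, Real.sign_of_pos hu, show -(Real.pi / 2) * Y = -(Real.pi * Y / 2) by ring,
      Real.cos_neg, Real.sin_neg]
    push_cast
    ring

lemma ofReal_mul_cpow_ofReal {r : ℝ} (hr : 0 < r) (z : ℂ) (y : ℝ) :
    (r * z) ^ (y : ℂ) = ((r ^ y : ℝ) : ℂ) * z ^ (y : ℂ) := by
  rw [Complex.cpow_ofReal, Complex.cpow_ofReal, Complex.arg_real_mul _ hr, norm_mul,
    Complex.norm_of_nonneg hr.le, Real.mul_rpow hr.le (norm_nonneg z), Complex.ofReal_mul,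
    mul_assoc]

section Schwartz

variable (f : 𝓢(ℝ, ℂ))

lemma integral_fourier_mul_exp (x : ℝ) :
    ∫ ξ, 𝓕 f ξ * Complex.exp (Complex.I * ((2 * Real.pi * ξ : ℝ) : ℂ) * x) = f x := by
  have hinv : 𝓕⁻ (𝓕 (f : ℝ → ℂ)) x = f x :=
    congrFun (f.continuous.fourierInv_fourier_eq f.integrable
      (by rw [← SchwartzMap.fourier_coe]; exact (𝓕 f).integrable)) x
  rw [← hinv, Real.fourierInv_eq', ← SchwartzMap.fourier_coe]
  refine integral_congr_ae (.of_forall fun ξ => ?_)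
  simp only [smul_eq_mul, mul_comm (𝓕 f ξ), RCLike.inner_apply, conj_trivial]
  congr 2
  push_cast
  ring

lemma integral_fourier_eq : ∫ ξ, 𝓕 f ξ = f 0 := by
  simpa using integral_fourier_mul_exp f 0

lemma integral_fourier_mul_I :
    ∫ ξ, 𝓕 f ξ * (Complex.I * ((2 * Real.pi * ξ : ℝ) : ℂ)) = deriv f 0 := by
  have hderiv : ∀ ξ, 𝓕 (SchwartzMap.derivCLM ℂ ℂ f) ξ =
      𝓕 f ξ * (Complex.I * ((2 * Real.pi * ξ : ℝ) : ℂ)) := fun ξ => by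
    have h : 𝓕 (SchwartzMap.derivCLM ℂ ℂ f) ξ = (2 * Real.pi * Complex.I * ξ) • 𝓕 f ξ :=
      congrFun (Real.fourier_deriv f.integrable f.differentiable
        (SchwartzMap.derivCLM ℂ ℂ f).integrable) ξ
    rw [h, smul_eq_mul]
    push_cast
    ring
  simp_rw [← hderiv]
  exact integral_fourier_eq _

lemma integrable_norm_fourier_mul_one_add_sq :
    Integrable fun ξ : ℝ => ‖𝓕 f ξ‖ * (1 + ‖Complex.I * ((2 * Real.pi * ξ : ℝ) : ℂ)‖ ^ 2) := by
  have h0 := (𝓕 f).integrable_pow_mul volume 0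
  have h2 := ((𝓕 f).integrable_pow_mul volume 2).const_mul ((2 * Real.pi) ^ 2)
  refine (h0.add h2).congr (.of_forall fun ξ => ?_)
  have hnorm : ‖Complex.I * ((2 * Real.pi * ξ : ℝ) : ℂ)‖ = 2 * Real.pi * ‖ξ‖ := by
    simp [abs_of_pos Real.pi_pos]
  simp only [Pi.add_apply, hnorm]
  ring

lemma integrable_norm_fourier_mul_rpow {Y : ℝ} (hY : Y ∈ Icc (0 : ℝ) 2) :
    Integrable fun ξ : ℝ => ‖𝓕 f ξ‖ * |2 * Real.pi * ξ| ^ Y := by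
  have hmeas : Measurable fun ξ : ℝ => ‖𝓕 f ξ‖ * |2 * Real.pi * ξ| ^ Y := by
    have := (𝓕 f).continuous
    fun_prop
  refine (integrable_norm_fourier_mul_one_add_sq f).mono' hmeas.aestronglyMeasurable
    (.of_forall fun ξ => ?_)
  rw [Real.norm_of_nonneg (by positivity), norm_mul, Complex.norm_I, one_mul, Complex.norm_real,
    Real.norm_eq_abs]
  gcongr
  rcases le_total |2 * Real.pi * ξ| 1 with h | h
  · linarith [Real.rpow_le_one (abs_nonneg _) h hY.1, sq_nonneg |2 * Real.pi * ξ|]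
  · linarith [Real.rpow_two |2 * Real.pi * ξ| ▸ Real.rpow_le_rpow_of_exponent_le h hY.2]

lemma integral_fourier_mul_exp_sub_one_sub (x : ℝ) :
    ∫ ξ, 𝓕 f ξ * (Complex.exp (Complex.I * ((2 * Real.pi * ξ : ℝ) : ℂ) * x) - 1 -
      Complex.I * ((2 * Real.pi * ξ : ℝ) : ℂ) * x) = f x - f 0 - x * deriv f 0 := by
  have hf := (𝓕 f).integrable (μ := volume)
  have hexp : Integrable fun ξ : ℝ =>
      𝓕 f ξ * Complex.exp (Complex.I * ((2 * Real.pi * ξ : ℝ) : ℂ) * x) := by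
    refine hf.mul_bdd (c := 1) ?_ ?_
    · fun_prop
    · refine .of_forall fun ξ => norm_exp_le_one_of_re_nonpos ?_
      simp
  have hlin : Integrable fun ξ : ℝ => 𝓕 f ξ * (Complex.I * ((2 * Real.pi * ξ : ℝ) : ℂ)) := by
    refine (integrable_norm_fourier_mul_rpow f (Y := 1) (by norm_num)).mono' ?_ ?_
    · have := (𝓕 f).continuous
      fun_prop
    · exact .of_forall fun ξ => by simp
  calc _ = ∫ ξ, (𝓕 f ξ * Complex.exp (Complex.I * ((2 * Real.pi * ξ : ℝ) : ℂ) * x) - 𝓕 f ξ -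
        𝓕 f ξ * (Complex.I * ((2 * Real.pi * ξ : ℝ) : ℂ)) * x) := by
        congr with ξ
        ring
    _ = _ := by
        rw [integral_sub (by exact hexp.sub hf) (hlin.mul_const _), integral_sub hexp hf,
          integral_mul_const, integral_fourier_mul_exp, integral_fourier_eq,
          integral_fourier_mul_I, mul_comm (deriv f 0)]

lemma integral_fourier_mul_neg_I_mul_cpow {Y : ℝ} (hY : Y ∈ Ioo (1 : ℝ) 2) :
    ∫ ξ : ℝ, 𝓕 f ξ *
        ((Real.Gamma (-Y) : ℂ) * (-(Complex.I * ((2 * Real.pi * ξ : ℝ) : ℂ))) ^ (Y : ℂ)) =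
      ∫ x in Ioi (0 : ℝ), ((x ^ (-Y - 1) : ℝ) : ℂ) * (f x - f 0 - x * deriv f 0) := by
  have hint : Integrable (Function.uncurry fun ξ x : ℝ => 𝓕 f ξ * (((x ^ (-Y - 1) : ℝ) : ℂ) *
      (Complex.exp (Complex.I * ((2 * Real.pi * ξ : ℝ) : ℂ) * x) - 1 -
        Complex.I * ((2 * Real.pi * ξ : ℝ) : ℂ) * x)))
      (volume.prod (volume.restrict (Ioi 0))) := by
    have hdom := (integrable_norm_fourier_mul_one_add_sq f).mul_prod
      ((integrableOn_rpow_mul_min_rpow hY.1 hY.2).const_mul 3)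
    have hcont := (𝓕 f).continuous
    refine hdom.mono' (Measurable.aestronglyMeasurable (by unfold Function.uncurry; fun_prop)) ?_
    rw [← Measure.restrict_univ (μ := volume), Measure.prod_restrict]
    refine ae_restrict_of_forall_mem (MeasurableSet.univ.prod measurableSet_Ioi) ?_
    rintro ⟨ξ, x⟩ ⟨-, hx : 0 < x⟩
    have hbound := norm_exp_mul_sub_one_sub_le
      (z := Complex.I * ((2 * Real.pi * ξ : ℝ) : ℂ)) (by simp) hx
    rw [Function.uncurry_apply_pair, norm_mul, norm_mul, Complex.norm_of_nonneg (by positivity)]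
    calc _ ≤ ‖𝓕 f ξ‖ * (x ^ (-Y - 1) * (3 * (1 + ‖Complex.I * ((2 * Real.pi * ξ : ℝ) : ℂ)‖ ^ 2) *
            min (x ^ (2 : ℝ)) (x ^ (1 : ℝ)))) := by gcongr
      _ = _ := by ring
  calc _ = ∫ ξ : ℝ, ∫ x in Ioi (0 : ℝ), 𝓕 f ξ * (((x ^ (-Y - 1) : ℝ) : ℂ) *
      (Complex.exp (Complex.I * ((2 * Real.pi * ξ : ℝ) : ℂ) * x) - 1 -
        Complex.I * ((2 * Real.pi * ξ : ℝ) : ℂ) * x)) := by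
        refine integral_congr_ae (.of_forall fun ξ => ?_)
        simp only
        rw [integral_const_mul, integral_rpow_mul_exp_sub_one_sub hY (by simp)]
    _ = ∫ x in Ioi (0 : ℝ), ((x ^ (-Y - 1) : ℝ) : ℂ) * (f x - f 0 - x * deriv f 0) := by
        rw [integral_integral_swap hint]
        simp only [mul_left_comm (𝓕 f _), integral_const_mul,
          integral_fourier_mul_exp_sub_one_sub]

end Schwartz

lemma integral_comp_div_eq_integral_fourier_mul_charFun (f : 𝓢(ℝ, ℂ)) (μ : Measure ℝ)
    [IsFiniteMeasure μ] (s : ℝ) :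
    ∫ x, f (x / s) ∂μ = ∫ ξ, 𝓕 f ξ * charFun μ (2 * Real.pi * ξ / s) := by
  have hint : Integrable (Function.uncurry fun x ξ : ℝ =>
      𝓕 f ξ * Complex.exp (Complex.I * ((2 * Real.pi * ξ : ℝ) : ℂ) * ((x / s : ℝ) : ℂ)))
      (μ.prod volume) := by
    have hcont := (𝓕 f).continuous
    refine ((integrable_const (1 : ℝ)).mul_prod (𝓕 f).integrable.norm).mono'
      (Measurable.aestronglyMeasurable (by unfold Function.uncurry; fun_prop))
      (.of_forall fun ⟨x, ξ⟩ => ?_)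
    rw [Function.uncurry_apply_pair, norm_mul, mul_comm]
    gcongr
    exact norm_exp_le_one_of_re_nonpos (by simp)
  calc ∫ x, f (x / s) ∂μ = ∫ x, (∫ ξ, 𝓕 f ξ *
        Complex.exp (Complex.I * ((2 * Real.pi * ξ : ℝ) : ℂ) * ((x / s : ℝ) : ℂ))) ∂μ := by
        simp only [integral_fourier_mul_exp]
    _ = ∫ ξ, 𝓕 f ξ * charFun μ (2 * Real.pi * ξ / s) := by
        rw [integral_integral_swap hint]
        congr with ξ
        rw [integral_const_mul, charFun_apply_real]
        congr with x
        push_cast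
        ring_nf

/-- The characteristic exponent `C Γ(-Y) |u| ^ Y (cos (π Y / 2) - i sign u sin (π Y / 2))` of the
totally positively skewed stable law, written through the principal branch as
`C Γ(-Y) (-i u) ^ Y` (see `stableExponent_eq`). -/
noncomputable def stableExponent (Y C u : ℝ) : ℂ :=
  ((C * Real.Gamma (-Y) : ℝ) : ℂ) * (-(Complex.I * u)) ^ (Y : ℂ)

lemma stableExponent_eq {Y : ℝ} (hY : Y ≠ 0) (C u : ℝ) :
    stableExponent Y C u = ((C * Real.Gamma (-Y) * |u| ^ Y : ℝ) : ℂ) *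
      (((Real.cos (Real.pi * Y / 2) : ℝ) : ℂ) -
        Complex.I * ((Real.sign u : ℝ) : ℂ) * ((Real.sin (Real.pi * Y / 2) : ℝ) : ℂ)) := by
  rw [stableExponent, neg_I_mul_ofReal_cpow hY, ← mul_assoc, ← Complex.ofReal_mul]

lemma norm_stableExponent (Y C u : ℝ) :
    ‖stableExponent Y C u‖ = |C * Real.Gamma (-Y)| * |u| ^ Y := by
  simp [stableExponent, Complex.norm_cpow_real]

lemma stableExponent_div (Y C u : ℝ) {s : ℝ} (hs : 0 < s) :
    stableExponent Y C (u / s) = (((s ^ Y)⁻¹ : ℝ) : ℂ) * stableExponent Y C u := by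
  have hscale : -(Complex.I * ((u / s : ℝ) : ℂ)) = ((s⁻¹ : ℝ) : ℂ) * -(Complex.I * u) := by
    push_cast
    ring
  rw [stableExponent, hscale, ofReal_mul_cpow_ofReal (inv_pos.2 hs), Real.inv_rpow hs.le,
    mul_left_comm, stableExponent]

lemma integral_fourier_mul_stableExponent {Y : ℝ} (hY : Y ∈ Ioo (1 : ℝ) 2) (C : ℝ)
    (f : 𝓢(ℝ, ℂ)) :
    ∫ ξ : ℝ, 𝓕 f ξ * stableExponent Y C (2 * Real.pi * ξ) =
      C * ∫ x in Ioi (0 : ℝ), ((x ^ (-Y - 1) : ℝ) : ℂ) * (f x - f 0 - x * deriv f 0) := by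
  rw [← integral_fourier_mul_neg_I_mul_cpow f hY, ← integral_const_mul]
  congr with ξ
  rw [stableExponent]
  push_cast
  ring

/-- `μ` has the characteristic function of the centered, totally positively skewed strictly
`Y`-stable law, whose Lévy density is `C x ^ (-Y - 1)` on `(0, ∞)` when `1 < Y < 2`. -/
def IsSpectrallyPositiveStable (Y C : ℝ) (μ : Measure ℝ) : Prop :=
  ∀ u : ℝ, charFun μ u = Complex.exp (stableExponent Y C u)

lemma tendsto_mul_exp_inv_mul_sub_one (w : ℂ) :
    Tendsto (fun r : ℝ => (r : ℂ) * (Complex.exp (((r⁻¹ : ℝ) : ℂ) * w) - 1)) atTop (𝓝 w) := by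
  have hderiv : HasDerivAt (fun r : ℝ => Complex.exp (w * r)) w 0 := by
    simpa using hasDerivAt_exp_mul_ofReal w 0
  have hslope := (hasDerivAt_iff_tendsto_slope_zero.1 hderiv).comp
    (tendsto_inv_atTop_nhdsGT_zero.mono_right (nhdsWithin_mono _ fun r hr => ne_of_gt hr))
  refine hslope.congr fun r => ?_
  simp [mul_comm w]

section TailEstimates

lemma integral_Ioi_rpow_neg_sub_one {Y ρ : ℝ} (hY : 0 < Y) (hρ : 0 < ρ) :
    ∫ x in Ioi ρ, x ^ (-Y - 1) = ρ ^ (-Y) / Y := by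
  rw [integral_Ioi_rpow_of_lt (by linarith) hρ, sub_add_cancel, neg_div_neg_eq]

lemma neg_le_integral_rpow_mul_sub_one {Y ρ : ℝ} (hY : 0 < Y) (hρ : 0 < ρ) {g : ℝ → ℝ}
    (hg_nonneg : ∀ x, 0 ≤ g x) (hg_le : ∀ x, g x ≤ 1) (hg_one : ∀ x ∈ Ioc 0 ρ, g x = 1) :
    -(ρ ^ (-Y) / Y) ≤ ∫ x in Ioi (0 : ℝ), x ^ (-Y - 1) * (g x - 1) := by
  have hvanish : ∀ x ∈ Ioi 0 \ Ioi ρ, x ^ (-Y - 1) * (g x - 1) = 0 := fun x ⟨hx0, hxρ⟩ => by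
    rw [hg_one x ⟨hx0, not_lt.1 hxρ⟩, sub_self, mul_zero]
  rw [setIntegral_eq_of_subset_of_forall_sdiff_eq_zero measurableSet_Ioi (Ioi_subset_Ioi hρ.le)
    hvanish, neg_le, ← integral_neg, ← integral_Ioi_rpow_neg_sub_one hY hρ]
  refine integral_mono_of_nonneg ?_ (integrableOn_Ioi_rpow_of_lt (by linarith) hρ) ?_ <;>
    filter_upwards [ae_restrict_mem measurableSet_Ioi] with x hx <;>
    have hweight : 0 ≤ x ^ (-Y - 1) := Real.rpow_nonneg (hρ.trans hx).le _
  · exact neg_nonneg.2 (mul_nonpos_of_nonneg_of_nonpos hweight (sub_nonpos.2 (hg_le x)))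
  · rw [← mul_neg, neg_sub]
    exact mul_le_of_le_one_right hweight (by linarith [hg_nonneg x])

lemma le_integral_rpow_mul {Y ρ K : ℝ} (hY : 0 < Y) (hρ : 0 < ρ) (hρK : ρ ≤ K) {g : ℝ → ℝ}
    (hint : IntegrableOn (fun x => x ^ (-Y - 1) * g x) (Ioi 0))
    (hg_nonneg : ∀ x, 0 ≤ g x) (hg_one : ∀ x ∈ Icc ρ K, g x = 1) :
    ρ ^ (-Y) / Y - K ^ (-Y) / Y ≤ ∫ x in Ioi (0 : ℝ), x ^ (-Y - 1) * g x := by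
  calc ρ ^ (-Y) / Y - K ^ (-Y) / Y
      = (∫ x in Ioi ρ, x ^ (-Y - 1)) - ∫ x in Ioi K, x ^ (-Y - 1) := by
        rw [integral_Ioi_rpow_neg_sub_one hY hρ, integral_Ioi_rpow_neg_sub_one hY (hρ.trans_le hρK)]
    _ = ∫ x in Ioc ρ K, x ^ (-Y - 1) := by
        rw [← setIntegral_sdiff measurableSet_Ioi (integrableOn_Ioi_rpow_of_lt (by linarith) hρ)
          (Ioi_subset_Ioi hρK), Ioi_sdiff_Ioi]
    _ = ∫ x in Ioc ρ K, x ^ (-Y - 1) * g x :=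
        setIntegral_congr_fun measurableSet_Ioc fun x hx => by
          rw [hg_one x (Ioc_subset_Icc_self hx), mul_one]
    _ ≤ ∫ x in Ioi (0 : ℝ), x ^ (-Y - 1) * g x := by
        refine setIntegral_mono_set hint ?_ (.of_forall fun x hx => hρ.trans hx.1)
        filter_upwards [ae_restrict_mem measurableSet_Ioi] with x hx
        exact mul_nonneg (Real.rpow_nonneg (le_of_lt hx) _) (hg_nonneg x)

lemma integrableOn_rpow_mul_of_forall_le_eq_zero {Y δ B : ℝ} (hY : 0 < Y) (hδ : 0 < δ) {g : ℝ → ℝ}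
    (hg : Continuous g) (hg_zero : ∀ x ≤ δ, g x = 0) (hbound : ∀ x, ‖g x‖ ≤ B) :
    IntegrableOn (fun x => x ^ (-Y - 1) * g x) (Ioi 0) := by
  have hfar : IntegrableOn (fun x => x ^ (-Y - 1) * g x) (Ioi δ) :=
    (integrableOn_Ioi_rpow_of_lt (by linarith) hδ).mul_bdd (c := B)
      hg.aestronglyMeasurable (.of_forall hbound)
  refine hfar.of_forall_sdiff_eq_zero measurableSet_Ioi fun x ⟨_, hx⟩ => ?_
  rw [hg_zero x (not_lt.1 hx), mul_zero]

lemma tendsto_mul_rpow_neg_div_nhds_one (C Y : ℝ) :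
    Tendsto (fun ρ : ℝ => C * (ρ ^ (-Y) / Y)) (𝓝 1) (𝓝 (C / Y)) := by
  have hpow := (Real.continuousAt_rpow_const 1 (-Y) (.inl one_ne_zero)).tendsto
  rw [Real.one_rpow] at hpow
  simpa only [mul_one_div] using (hpow.div_const Y).const_mul C

lemma exists_mul_rpow_neg_div_lt {C Y c : ℝ} (hc : C / Y < c) :
    ∃ ρ ∈ Ioo (0 : ℝ) 1, C * (ρ ^ (-Y) / Y) < c := by
  have hlim := (tendsto_mul_rpow_neg_div_nhds_one C Y).mono_left (nhdsWithin_le_nhds (s := Iio 1))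
  have hmem : ∀ᶠ ρ : ℝ in 𝓝[<] 1, ρ ∈ Ioo 0 1 := Ioo_mem_nhdsLT one_pos
  exact (hmem.and (hlim.eventually_lt_const hc)).exists

lemma exists_lt_mul_rpow_neg_div_sub {C Y c : ℝ} (hY : 0 < Y) (hc : c < C / Y) :
    ∃ ρ > 1, ∃ K > ρ, c < C * (ρ ^ (-Y) / Y - K ^ (-Y) / Y) := by
  have hlim := (tendsto_mul_rpow_neg_div_nhds_one C Y).mono_left (nhdsWithin_le_nhds (s := Ioi 1))
  obtain ⟨ρ, hρ, hρc⟩ := (eventually_mem_nhdsWithin.and (hlim.eventually_const_lt hc)).exists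
  have hlimK := (((tendsto_rpow_neg_atTop hY).div_const Y).const_sub (ρ ^ (-Y) / Y)).const_mul C
  rw [zero_div, sub_zero] at hlimK
  exact ⟨ρ, hρ, ((eventually_gt_atTop ρ).and (hlimK.eventually_const_lt hρc)).exists⟩

lemma integral_le_measureReal {α : Type*} [MeasurableSpace α] {μ : Measure α} [IsFiniteMeasure μ]
    {S : Set α} {f : α → ℝ} (hf_le : ∀ x ∈ S, f x ≤ 1) (hf_nonpos : ∀ x ∈ Sᶜ, f x ≤ 0) :
    ∫ x, f x ∂μ ≤ μ.real S :=
  (ENNReal.ofReal_le_iff_le_toReal (measure_ne_top _ _)).1 (integral_le_measure hf_le hf_nonpos)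

end TailEstimates

lemma tendsto_rpow_mul_comp_of_tendsto_div {T a : ℝ → ℝ} {Y L α : ℝ}
    (hT : Tendsto (fun s => s ^ Y * T s) atTop (𝓝 L)) (hα : 0 < α)
    (ha : Tendsto (fun s => a s / s) atTop (𝓝 α)) :
    Tendsto (fun s => s ^ Y * T (a s)) atTop (𝓝 (α ^ (-Y) * L)) := by
  have ha_atTop : Tendsto a atTop atTop := by
    refine (ha.pos_mul_atTop hα tendsto_id).congr' ?_
    filter_upwards [eventually_ne_atTop 0] with s hs using div_mul_cancel₀ _ hs
  refine ((ha.rpow_const (.inl hα.ne')).mul (hT.comp ha_atTop)).congr' ?_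
  filter_upwards [eventually_gt_atTop 0, ha_atTop.eventually_gt_atTop 0] with s hs has
  have hasY : a s ^ Y ≠ 0 := (Real.rpow_pos_of_pos has Y).ne'
  rw [Function.comp_apply, Real.rpow_neg (div_pos has hs).le, Real.div_rpow has.le hs.le]
  field_simp

lemma tendsto_mul_sub_div_div (x y k : ℝ) :
    Tendsto (fun s => (s * x - y) / k / s) atTop (𝓝 (x / k)) := by
  have hlim := ((tendsto_const_nhds (x := y)).div_atTop tendsto_id).const_sub x
  rw [sub_zero] at hlim
  refine (hlim.div_const k).congr' ?_
  filter_upwards [eventually_ne_atTop 0] with s hs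
  rw [id, div_right_comm, sub_div (s * x), mul_div_cancel_left₀ _ hs]

lemma measureReal_prod_eq_integral_symm {α β : Type*} [MeasurableSpace α] [MeasurableSpace β]
    (μ : Measure α) (ν : Measure β) [IsFiniteMeasure μ] [SFinite ν] {S : Set (α × β)}
    (hS : MeasurableSet S) :
    (μ.prod ν).real S = ∫ b, μ.real ((fun a => (a, b)) ⁻¹' S) ∂ν := by
  rw [measureReal_def, Measure.prod_apply_symm hS,
    ← integral_toReal (measurable_measure_prodMk_right hS).aemeasurable
      (.of_forall fun b => measure_lt_top μ _)]
  rfl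

/-- The set of values `(u, v)` of the pair `(U, V)` on which `U - V` is at least the threshold `d`
and the level `y` lies between `M* U + G* V` and `M U + G V`, where `M* = M - 1` and `G* = G + 1`;
its probability is the one to be estimated. -/
def crossingRegion (M G d y : ℝ) : Set (ℝ × ℝ) :=
  {p | d ≤ p.1 - p.2 ∧ (M - 1) * p.1 + (G + 1) * p.2 ≤ y ∧ y ≤ M * p.1 + G * p.2}

section CrossingRegion

variable {M G x : ℝ} {d : ℝ → ℝ}

lemma measurableSet_crossingRegion (M G d y : ℝ) : MeasurableSet (crossingRegion M G d y) := by
  unfold crossingRegion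
  measurability

lemma eventually_preimage_crossingRegion_eq_Icc (hM : 1 < M) (hx : 0 < x)
    (hd : d =o[atTop] (id : ℝ → ℝ)) (G v : ℝ) :
    ∀ᶠ s in atTop, (fun u => (u, v)) ⁻¹' crossingRegion M G (d s) (s * x) =
      Icc ((s * x - G * v) / M) ((s * x - (G + 1) * v) / (M - 1)) := by
  have hM0 : 0 < M := one_pos.trans hM
  have hgap : Tendsto (fun s => s * (x / M - d s / s)) atTop atTop :=
    tendsto_id.atTop_mul_pos (div_pos hx hM0)
      (by simpa only [sub_zero, id] using hd.tendsto_div_nhds_zero.const_sub (x / M))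
  filter_upwards [hgap.eventually_ge_atTop (v + G * v / M), eventually_ne_atTop 0] with s hs hs0
  ext u
  simp only [crossingRegion, mem_preimage, mem_ofPred_eq, mem_Icc, div_le_iff₀ hM0,
    le_div_iff₀ (sub_pos.2 hM)]
  constructor
  · rintro ⟨-, hupper, hlower⟩
    constructor <;> linarith
  · rintro ⟨hlower, hupper⟩
    have hu : (s * x - G * v) / M ≤ u := (div_le_iff₀ hM0).2 hlower
    rw [sub_div, mul_div_assoc] at hu
    rw [mul_sub, mul_div_cancel₀ _ hs0] at hs
    refine ⟨?_, ?_, ?_⟩ <;> linarith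

/-- On the region `v ≤ u - d`, so the lower bound `y ≤ M u + G v` forces `u` itself to be large,
whatever `v` is. -/
lemma eventually_le_fst_of_mem_crossingRegion (hM : 0 < M) (hG : 0 ≤ G) (hx : 0 < x)
    (hd : d =o[atTop] (id : ℝ → ℝ)) :
    ∀ᶠ s in atTop, ∀ p ∈ crossingRegion M G (d s) (s * x), x / (2 * (M + G)) * s ≤ p.1 := by
  filter_upwards [(hd.const_mul_left G).bound (half_pos hx), eventually_ge_atTop 0]
    with s hds hs p hp
  obtain ⟨hdiff, -, hlower⟩ := hp
  rw [Real.norm_eq_abs, id, Real.norm_of_nonneg hs, abs_le] at hds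
  have hGd : G * d s ≤ G * (p.1 - p.2) := by gcongr
  rw [div_mul_eq_mul_div, div_le_iff₀ (by positivity)]
  linarith [hds.1]

end CrossingRegion

namespace IsSpectrallyPositiveStable

variable {Y C : ℝ} {μ : Measure ℝ} [IsProbabilityMeasure μ]

lemma re_stableExponent_nonpos (h : IsSpectrallyPositiveStable Y C μ) (u : ℝ) :
    (stableExponent Y C u).re ≤ 0 := by
  have hnorm := norm_charFun_le_one (μ := μ) u
  rwa [h u, Complex.norm_exp, Real.exp_le_one_iff] at hnorm

lemma norm_rpow_mul_charFun_div_sub_one_le (h : IsSpectrallyPositiveStable Y C μ) (u : ℝ) {s : ℝ}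
    (hs : 0 < s) :
    ‖((s ^ Y : ℝ) : ℂ) * (charFun μ (u / s) - 1)‖ ≤ 2 * ‖stableExponent Y C u‖ := by
  have hsY : 0 < s ^ Y := Real.rpow_pos_of_pos hs Y
  rw [h, norm_mul, Complex.norm_of_nonneg hsY.le]
  calc s ^ Y * ‖Complex.exp (stableExponent Y C (u / s)) - 1‖
      ≤ s ^ Y * (2 * ‖stableExponent Y C (u / s)‖) := by
        gcongr
        refine (norm_exp_sub_one_le_of_re_nonpos (h.re_stableExponent_nonpos _)).trans ?_
        gcongr
        exact min_le_left _ _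
    _ = 2 * ‖stableExponent Y C u‖ := by
        rw [stableExponent_div Y C u hs, norm_mul, Complex.norm_of_nonneg (inv_pos.2 hsY).le]
        field_simp

lemma tendsto_rpow_mul_integral_comp_div_sub (h : IsSpectrallyPositiveStable Y C μ)
    (hY : Y ∈ Ioo (1 : ℝ) 2) (f : 𝓢(ℝ, ℂ)) :
    Tendsto (fun s : ℝ => ((s ^ Y : ℝ) : ℂ) * (∫ x, f (x / s) ∂μ - f 0)) atTop
      (𝓝 (C * ∫ x in Ioi (0 : ℝ), ((x ^ (-Y - 1) : ℝ) : ℂ) * (f x - f 0 - x * deriv f 0))) := by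
  have hY0 : 0 < Y := one_pos.trans hY.1
  have hcharFun : ∀ s : ℝ, Integrable fun ξ => 𝓕 f ξ * charFun μ (2 * Real.pi * ξ / s) := fun s =>
    (𝓕 f).integrable.mul_bdd (c := 1) (by fun_prop) (.of_forall fun ξ => norm_charFun_le_one _)
  have hfourier : ∀ s : ℝ, ((s ^ Y : ℝ) : ℂ) * (∫ x, f (x / s) ∂μ - f 0) =
      ∫ ξ, 𝓕 f ξ * (((s ^ Y : ℝ) : ℂ) * (charFun μ (2 * Real.pi * ξ / s) - 1)) := fun s => by
    rw [integral_comp_div_eq_integral_fourier_mul_charFun, ← integral_fourier_eq f,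
      ← integral_sub (hcharFun s) (𝓕 f).integrable, ← integral_const_mul]
    congr with ξ
    ring
  simp_rw [hfourier, ← integral_fourier_mul_stableExponent hY]
  refine tendsto_integral_filter_of_dominated_convergence
    (fun ξ => 2 * |C * Real.Gamma (-Y)| * (‖𝓕 f ξ‖ * |2 * Real.pi * ξ| ^ Y)) ?_ ?_
    ((integrable_norm_fourier_mul_rpow f ⟨hY0.le, hY.2.le⟩).const_mul _) ?_
  · have hcont := (𝓕 f).continuous
    exact .of_forall fun s => by fun_prop
  · filter_upwards [eventually_gt_atTop 0] with s hs
    refine .of_forall fun ξ => ?_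
    calc _ ≤ ‖𝓕 f ξ‖ * (2 * ‖stableExponent Y C (2 * Real.pi * ξ)‖) := by
          rw [norm_mul]
          gcongr
          exact h.norm_rpow_mul_charFun_div_sub_one_le _ hs
      _ = _ := by
          rw [norm_stableExponent]
          ring
  · refine .of_forall fun ξ => Tendsto.const_mul _ ?_
    refine ((tendsto_mul_exp_inv_mul_sub_one _).comp (tendsto_rpow_atTop hY0)).congr' ?_
    filter_upwards [eventually_gt_atTop 0] with s hs
    rw [h, stableExponent_div Y C _ hs, Function.comp_apply]

lemma tendsto_rpow_mul_integral_comp_div_sub_of_hasCompactSupport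
    (h : IsSpectrallyPositiveStable Y C μ) (hY : Y ∈ Ioo (1 : ℝ) 2) {g : ℝ → ℝ}
    (hg : ContDiff ℝ (⊤ : ℕ∞) g) (hsupp : HasCompactSupport g) (hg0 : g =ᶠ[𝓝 0] fun _ => g 0) :
    Tendsto (fun s : ℝ => s ^ Y * (∫ x, g (x / s) ∂μ - g 0)) atTop
      (𝓝 (C * ∫ x in Ioi (0 : ℝ), x ^ (-Y - 1) * (g x - g 0))) := by
  let f : 𝓢(ℝ, ℂ) := (hsupp.comp_left Complex.ofReal_zero).toSchwartzMap
    (Complex.ofRealCLM.contDiff.comp hg)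
  have hf : ∀ x, f x = (g x : ℂ) := fun x => rfl
  have hderiv : deriv f 0 = 0 := by
    have hf0 : (f : ℝ → ℂ) =ᶠ[𝓝 0] fun _ => (g 0 : ℂ) := by
      filter_upwards [hg0] with x hx
      rw [hf, hx]
    rw [hf0.deriv_eq, deriv_const]
  have hlim := h.tendsto_rpow_mul_integral_comp_div_sub hY f
  simp only [hf, hderiv, mul_zero, sub_zero, ← Complex.ofReal_sub, ← Complex.ofReal_mul,
    integral_complex_ofReal] at hlim
  exact tendsto_ofReal_iff.1 hlim

lemma eventually_rpow_mul_measureReal_Ici_lt (h : IsSpectrallyPositiveStable Y C μ)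
    (hY : Y ∈ Ioo (1 : ℝ) 2) (hC : 0 ≤ C) {c : ℝ} (hc : C / Y < c) :
    ∀ᶠ s in atTop, s ^ Y * μ.real (Ici s) < c := by
  have hY0 : 0 < Y := one_pos.trans hY.1
  obtain ⟨ρ, ⟨hρ0, hρ1⟩, hρc⟩ := exists_mul_rpow_neg_div_lt hc
  let g : ContDiffBump (0 : ℝ) := ⟨ρ, 1, hρ0, hρ1⟩
  have hg_one : ∀ x, |x| ≤ ρ → g x = 1 := fun x hx => g.one_of_mem_closedBall (by simpa using hx)
  have hg0 : g 0 = 1 := hg_one 0 (by simpa using hρ0.le)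
  have hlim := h.tendsto_rpow_mul_integral_comp_div_sub_of_hasCompactSupport hY
    g.contDiff g.hasCompactSupport (hg0 ▸ g.eventuallyEq_one)
  have hbound : -c < C * ∫ x in Ioi (0 : ℝ), x ^ (-Y - 1) * (g x - g 0) := by
    rw [hg0]
    have hle := neg_le_integral_rpow_mul_sub_one hY0 hρ0 (fun x => g.nonneg) (fun x => g.le_one)
      fun x hx => hg_one x (abs_le.2 ⟨by linarith [hx.1], hx.2⟩)
    linarith [mul_le_mul_of_nonneg_left hle hC]
  filter_upwards [hlim.eventually_const_lt hbound, eventually_gt_atTop 0] with s hs hs0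
  have htail : ∫ x, g (x / s) ∂μ ≤ μ.real (Iio s) := by
    refine integral_le_measureReal (fun x _ => g.le_one) fun x hx => (g.zero_of_le_dist ?_).le
    rw [Real.dist_0_eq_abs]
    exact ((one_le_div hs0).2 (not_lt.1 hx)).trans (le_abs_self _)
  rw [← compl_Ici, probReal_compl_eq_one_sub measurableSet_Ici] at htail
  rw [hg0] at hs
  linarith [mul_le_mul_of_nonneg_left htail (Real.rpow_nonneg hs0.le Y)]

lemma eventually_lt_rpow_mul_measureReal_Ioi (h : IsSpectrallyPositiveStable Y C μ)
    (hY : Y ∈ Ioo (1 : ℝ) 2) (hC : 0 ≤ C) {c : ℝ} (hc : c < C / Y) :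
    ∀ᶠ s in atTop, c < s ^ Y * μ.real (Ioi s) := by
  have hY0 : 0 < Y := one_pos.trans hY.1
  obtain ⟨ρ, hρ1, K, hρK, hKc⟩ := exists_lt_mul_rpow_neg_div_sub hY0 hc
  let g : ContDiffBump ((ρ + K) / 2 : ℝ) :=
    ⟨(K - ρ) / 2, (K - ρ) / 2 + (ρ - 1), by linarith, by linarith⟩
  have hg_one : ∀ x ∈ Icc ρ K, g x = 1 := fun x hx => g.one_of_mem_closedBall (by
    rw [Real.closedBall_eq_Icc]
    constructor <;> dsimp only [g] <;> linarith [hx.1, hx.2])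
  have hg_zero : ∀ x ≤ 1, g x = 0 := fun x hx => g.zero_of_le_dist (by
    rw [dist_comm, Real.dist_eq]
    exact le_trans (by dsimp only [g]; linarith) (le_abs_self _))
  have hlim := h.tendsto_rpow_mul_integral_comp_div_sub_of_hasCompactSupport hY
    g.contDiff g.hasCompactSupport <| by
      filter_upwards [Iic_mem_nhds one_pos] with x hx
      rw [hg_zero x hx, hg_zero 0 zero_le_one]
  simp only [hg_zero 0 zero_le_one, sub_zero] at hlim
  have hint : IntegrableOn (fun x => x ^ (-Y - 1) * g x) (Ioi 0) :=
    integrableOn_rpow_mul_of_forall_le_eq_zero hY0 one_pos g.continuous hg_zero (B := 1) fun x => by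
      rw [Real.norm_of_nonneg g.nonneg]
      exact g.le_one
  have hbound : c < C * ∫ x in Ioi (0 : ℝ), x ^ (-Y - 1) * g x :=
    hKc.trans_le (by
      gcongr
      exact le_integral_rpow_mul hY0 (one_pos.trans hρ1) hρK.le hint (fun x => g.nonneg) hg_one)
  filter_upwards [hlim.eventually_const_lt hbound, eventually_gt_atTop 0] with s hs hs0
  have htail : ∫ x, g (x / s) ∂μ ≤ μ.real (Ioi s) :=
    integral_le_measureReal (fun x _ => g.le_one) fun x hx =>
      (hg_zero _ ((div_le_one hs0).2 (not_lt.1 hx))).le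
  exact hs.trans_le (by gcongr)

lemma tendsto_rpow_mul_measureReal_Ici (h : IsSpectrallyPositiveStable Y C μ)
    (hY : Y ∈ Ioo (1 : ℝ) 2) (hC : 0 ≤ C) :
    Tendsto (fun s => s ^ Y * μ.real (Ici s)) atTop (𝓝 (C / Y)) := by
  refine tendsto_order.2 ⟨fun c hc => ?_, fun c hc =>
    h.eventually_rpow_mul_measureReal_Ici_lt hY hC hc⟩
  filter_upwards [h.eventually_lt_rpow_mul_measureReal_Ioi hY hC hc, eventually_ge_atTop 0]
    with s hs hs0
  have hmono : μ.real (Ioi s) ≤ μ.real (Ici s) := measureReal_mono Ioi_subset_Ici_self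
  exact hs.trans_le (by gcongr)

lemma tendsto_rpow_mul_measureReal_Ioi (h : IsSpectrallyPositiveStable Y C μ)
    (hY : Y ∈ Ioo (1 : ℝ) 2) (hC : 0 ≤ C) :
    Tendsto (fun s => s ^ Y * μ.real (Ioi s)) atTop (𝓝 (C / Y)) := by
  refine tendsto_order.2 ⟨fun c hc => h.eventually_lt_rpow_mul_measureReal_Ioi hY hC hc,
    fun c hc => ?_⟩
  filter_upwards [h.eventually_rpow_mul_measureReal_Ici_lt hY hC hc, eventually_ge_atTop 0]
    with s hs hs0
  have hmono : μ.real (Ioi s) ≤ μ.real (Ici s) := measureReal_mono Ioi_subset_Ici_self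
  exact lt_of_le_of_lt (by gcongr) hs

lemma exists_eventually_rpow_mul_measureReal_Ici_mul_le (h : IsSpectrallyPositiveStable Y C μ)
    (hY : Y ∈ Ioo (1 : ℝ) 2) (hC : 0 ≤ C) {c : ℝ} (hc : 0 < c) :
    ∃ B, ∀ᶠ s in atTop, s ^ Y * μ.real (Ici (c * s)) ≤ B := by
  have hscale : Tendsto (fun s => c * s / s) atTop (𝓝 c) := tendsto_const_nhds.congr' <| by
    filter_upwards [eventually_ne_atTop 0] with s hs using (mul_div_cancel_right₀ c hs).symm
  exact (tendsto_rpow_mul_comp_of_tendsto_div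
    (h.tendsto_rpow_mul_measureReal_Ici hY hC) hc hscale).isBoundedUnder_le

lemma tendsto_rpow_mul_measureReal_Icc (h : IsSpectrallyPositiveStable Y C μ)
    (hY : Y ∈ Ioo (1 : ℝ) 2) (hC : 0 ≤ C) {a b : ℝ → ℝ} {α β : ℝ} (hα : 0 < α) (hαβ : α < β)
    (ha : Tendsto (fun s => a s / s) atTop (𝓝 α)) (hb : Tendsto (fun s => b s / s) atTop (𝓝 β)) :
    Tendsto (fun s => s ^ Y * μ.real (Icc (a s) (b s))) atTop
      (𝓝 (C / Y * (α ^ (-Y) - β ^ (-Y)))) := by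
  have hlower := tendsto_rpow_mul_comp_of_tendsto_div
    (h.tendsto_rpow_mul_measureReal_Ici hY hC) hα ha
  have hupper := tendsto_rpow_mul_comp_of_tendsto_div
    (h.tendsto_rpow_mul_measureReal_Ioi hY hC) (hα.trans hαβ) hb
  rw [mul_comm, sub_mul]
  refine (hlower.sub hupper).congr' ?_
  filter_upwards [ha.eventually_lt hb hαβ, eventually_gt_atTop 0] with s hs hs0
  have hab : a s ≤ b s := ((div_lt_div_iff_of_pos_right hs0).1 hs).le
  rw [← mul_sub, ← Ici_sdiff_Ioi, measureReal_sdiff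
    ((Ioi_subset_Ioi hab).trans Ioi_subset_Ici_self) measurableSet_Ioi]

lemma tendsto_rpow_mul_prod_measureReal_crossingRegion (h : IsSpectrallyPositiveStable Y C μ)
    (hY : Y ∈ Ioo (1 : ℝ) 2) (hC : 0 ≤ C) {M G x : ℝ} (hM : 1 < M) (hG : 0 ≤ G) (hx : 0 < x)
    {d : ℝ → ℝ} (hd : d =o[atTop] (id : ℝ → ℝ)) (ν : Measure ℝ) [IsProbabilityMeasure ν] :
    Tendsto (fun s => s ^ Y * (μ.prod ν).real (crossingRegion M G (d s) (s * x))) atTop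
      (𝓝 (C / Y * ((x / M) ^ (-Y) - (x / (M - 1)) ^ (-Y)))) := by
  have hM0 : 0 < M := one_pos.trans hM
  have hc : 0 < x / (2 * (M + G)) := by positivity
  obtain ⟨B, hB⟩ := h.exists_eventually_rpow_mul_measureReal_Ici_mul_le hY hC hc
  have hconst : ∀ c : ℝ, c = ∫ _, c ∂ν := fun c => by simp
  rw [hconst (C / Y * _)]
  simp_rw [measureReal_prod_eq_integral_symm μ ν (measurableSet_crossingRegion _ _ _ _),
    ← integral_const_mul]
  refine tendsto_integral_filter_of_dominated_convergence (fun _ => B) ?_ ?_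
    (integrable_const _) ?_
  · exact .of_forall fun s => ((measurable_measure_prodMk_right
      (measurableSet_crossingRegion _ _ _ _)).ennreal_toReal.const_mul _).aestronglyMeasurable
  · filter_upwards [hB, eventually_le_fst_of_mem_crossingRegion hM0 hG hx hd,
      eventually_ge_atTop 0] with s hsB hsub hs0
    refine .of_forall fun v => ?_
    rw [Real.norm_of_nonneg (by positivity)]
    have hmono : μ.real ((fun u => (u, v)) ⁻¹' crossingRegion M G (d s) (s * x)) ≤
        μ.real (Ici (x / (2 * (M + G)) * s)) := measureReal_mono fun u hu => hsub _ hu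
    exact le_trans (by gcongr) hsB
  · refine .of_forall fun v => ?_
    refine (h.tendsto_rpow_mul_measureReal_Icc hY hC (div_pos hx hM0) ?_
      (tendsto_mul_sub_div_div x (G * v) M)
      (tendsto_mul_sub_div_div x ((G + 1) * v) (M - 1))).congr' ?_
    · exact div_lt_div_of_pos_left hx (sub_pos.2 hM) (by linarith)
    · filter_upwards [eventually_preimage_crossingRegion_eq_Icc hM hx hd G v] with s hs
      rw [hs]

end IsSpectrallyPositiveStable

lemma isSpectrallyPositiveStable_map {Ω : Type*} [MeasurableSpace Ω] {P : Measure Ω} {Y C : ℝ}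
    (hY : Y ≠ 0) {U : Ω → ℝ} (hU : Measurable U)
    (hUchar : ∀ u : ℝ, (∫ ω, Complex.exp (Complex.I * u * (U ω)) ∂P) =
      Complex.exp (((C * Real.Gamma (-Y) * |u| ^ Y : ℝ) : ℂ) *
        (((Real.cos (Real.pi * Y / 2) : ℝ) : ℂ)
          - Complex.I * ((Real.sign u : ℝ) : ℂ) * ((Real.sin (Real.pi * Y / 2) : ℝ) : ℂ)))) :
    IsSpectrallyPositiveStable Y C (P.map U) := fun u => by
  rw [stableExponent_eq hY, ← hUchar, charFun_apply_real,
    integral_map hU.aemeasurable (by fun_prop)]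
  congr with ω
  ring_nf

lemma isLittleO_rpow_mul_const_id {a : ℝ} (ha : a < 1) (w : ℝ) :
    (fun s : ℝ => s ^ a * w) =o[atTop] (id : ℝ → ℝ) := by
  have hlim := (tendsto_rpow_neg_atTop (sub_pos.2 ha)).mul_const w
  rw [zero_mul] at hlim
  refine (Asymptotics.isLittleO_iff_tendsto' ?_).2 (hlim.congr' ?_)
  · filter_upwards [eventually_ne_atTop 0] with s hs hs0 using absurd hs0 hs
  · filter_upwards [eventually_gt_atTop 0] with s hs
    rw [neg_sub, Real.rpow_sub_one hs.ne', div_mul_eq_mul_div, id]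

lemma div_mul_div_rpow_neg_sub {M x : ℝ} (hM : 1 < M) (hx : 0 < x) (Y L : ℝ) :
    L * ((x / M) ^ (-Y) - (x / (M - 1)) ^ (-Y)) = L * (M ^ Y - (M - 1) ^ Y) * x ^ (-Y) := by
  have hM0 : 0 < M := one_pos.trans hM
  have hM1 : 0 < M - 1 := sub_pos.2 hM
  rw [Real.div_rpow hx.le hM0.le, Real.div_rpow hx.le hM1.le, Real.rpow_neg hM0.le,
    Real.rpow_neg hM1.le, div_inv_eq_mul, div_inv_eq_mul]
  ring

theorem stmt14_general {Ω : Type*} [MeasurableSpace Ω] (P : Measure Ω) [IsProbabilityMeasure P]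
    (Y C M G : ℝ) (hY : Y ∈ Set.Ioo (1 : ℝ) 2) (hC : 0 ≤ C) (hM : 1 < M) (hG : 0 ≤ G)
    (U V : Ω → ℝ) (hU : Measurable U) (hV : Measurable V) (hIndep : IndepFun U V P)
    (hUchar : ∀ u : ℝ, (∫ ω, Complex.exp (Complex.I * u * (U ω)) ∂P) =
      Complex.exp (((C * Real.Gamma (-Y) * |u| ^ Y : ℝ) : ℂ) *
        (((Real.cos (Real.pi * Y / 2) : ℝ) : ℂ)
          - Complex.I * ((Real.sign u : ℝ) : ℂ) * ((Real.sin (Real.pi * Y / 2) : ℝ) : ℂ))))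
    (x w : ℝ) (hx : 0 < x) :
    Tendsto
      (fun t => t⁻¹ * (P {ω | t ^ ((1 : ℝ) / 2 - 1 / Y) * w ≤ U ω - V ω ∧
          (M - 1) * U ω + (G + 1) * V ω ≤ t ^ (-(1 / Y)) * x ∧
          t ^ (-(1 / Y)) * x ≤ M * U ω + G * V ω}).toReal)
      (𝓝[>] (0 : ℝ))
      (𝓝 ((C / Y) * (M ^ Y - (M - 1) ^ Y) * x ^ (-Y))) := by
  have hY0 : 0 < Y := one_pos.trans hY.1
  have hstable := isSpectrallyPositiveStable_map hY0.ne' hU hUchar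
  have := Measure.isProbabilityMeasure_map hU.aemeasurable (μ := P)
  have := Measure.isProbabilityMeasure_map hV.aemeasurable (μ := P)
  have hscale : Tendsto (fun t : ℝ => t ^ (-(1 / Y))) (𝓝[>] 0) atTop :=
    tendsto_rpow_neg_nhdsGT_zero (neg_lt_zero.2 (one_div_pos.2 hY0))
  have hlim := (hstable.tendsto_rpow_mul_prod_measureReal_crossingRegion hY hC hM hG hx
    (isLittleO_rpow_mul_const_id (by linarith : 1 - Y / 2 < 1) w) (P.map V)).comp hscale
  rw [div_mul_div_rpow_neg_sub hM hx] at hlim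
  refine hlim.congr' ?_
  filter_upwards [self_mem_nhdsWithin] with t (ht : 0 < t)
  have hinv : (t ^ (-(1 / Y))) ^ Y = t⁻¹ := by
    rw [← Real.rpow_mul ht.le, ← Real.rpow_neg_one, neg_mul, one_div_mul_cancel hY0.ne']
  have hthreshold : (t ^ (-(1 / Y))) ^ (1 - Y / 2) = t ^ ((1 : ℝ) / 2 - 1 / Y) := by
    rw [← Real.rpow_mul ht.le]
    congr 1
    field_simp
    ring
  rw [Function.comp_apply, hinv, hthreshold,
    ← (indepFun_iff_map_prod_eq_prod_map_map hU.aemeasurable hV.aemeasurable).1 hIndep,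
    map_measureReal_apply (hU.prodMk hV) (measurableSet_crossingRegion _ _ _ _)]
  rfl

/-- Pointwise scaling limit of the joint stable probability (display (NdedLmt2)). -/
theorem stmt14
    {Ω : Type} [MeasurableSpace Ω] (P : Measure Ω) [IsProbabilityMeasure P]
    (Y C M G : ℝ) (hY : Y ∈ Set.Ioo (1:ℝ) 2) (hC : 0 < C) (hM : 1 < M) (hG : 0 < G)
    (U V : Ω → ℝ) (hU : Measurable U) (hV : Measurable V)
    (hIndep : IndepFun U V P)
    (hUchar : ∀ u : ℝ, (∫ ω, Complex.exp (Complex.I * u * (U ω)) ∂P) =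
      Complex.exp (((C * Real.Gamma (-Y) * |u| ^ Y : ℝ) : ℂ) *
        (((Real.cos (Real.pi * Y / 2) : ℝ) : ℂ)
          - Complex.I * ((Real.sign u : ℝ) : ℂ) * ((Real.sin (Real.pi * Y / 2) : ℝ) : ℂ))))
    (hVchar : ∀ u : ℝ, (∫ ω, Complex.exp (Complex.I * u * (V ω)) ∂P) =
      Complex.exp (((C * Real.Gamma (-Y) * |u| ^ Y : ℝ) : ℂ) *
        (((Real.cos (Real.pi * Y / 2) : ℝ) : ℂ)
          - Complex.I * ((Real.sign u : ℝ) : ℂ) * ((Real.sin (Real.pi * Y / 2) : ℝ) : ℂ))))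
    (x w : ℝ) (hx : 0 < x) (hw : 0 < w) :
    Filter.Tendsto
      (fun t => t⁻¹ * (P {ω | t ^ ((1:ℝ)/2 - 1/Y) * w ≤ U ω - V ω ∧
          (M - 1) * U ω + (G + 1) * V ω ≤ t ^ (-(1/Y)) * x ∧
          t ^ (-(1/Y)) * x ≤ M * U ω + G * V ω}).toReal)
      (𝓝[>] (0:ℝ))
      (𝓝 ((C / Y) * (M ^ Y - (M - 1) ^ Y) * x ^ (-Y))) :=
  stmt14_general P Y C M G hY hC.le hM hG.le U V hU hV hIndep hUchar x w hx
end
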